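/- arXiv:2403.07348 — 10 statements merged into one kernel-verified Lean document; each statement's English description precedes it below -/
import Mathlib

section
/- Let z and y be unit quaternions. The ℝ-linear isometry [z,y] of ℍ given by x ↦ z̄ x y has no invariant 1-dimensional ℝ-subspace if and only if z is not conjugate in the group of nonzero quaternions to y or to −y; that is, [z,y] has an invariant 1-dimensional subspace if and only if there exists a nonzero quaternion x with z = x y x⁻¹ or z = −x y x⁻¹. -/
open Quaternion

noncomputable section

/-- For quaternions `z, w`, the ℝ-linear map `[z,w] : x ↦ z̄ x w` on `ℍ`. -/
def qrot (z w : ℍ[ℝ]) : ℍ[ℝ] →ₗ[ℝ] ℍ[ℝ] :=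
  (LinearMap.mulRight ℝ w).comp (LinearMap.mulLeft ℝ (star z))

/-!
The invariant lines of a linear map are those spanned by eigenvectors with nonzero eigenvalue.
For `z ≠ 0`, cancelling `z̄` in `z̄ x y = (c |z|²) x = z̄ (c z x)` leaves `x y = c z x`, so these
eigenvectors are the `x` conjugating `y` to a real multiple `c z`.
As conjugation preserves the norm, `|z| = |y|` forces `c = ±1`.
-/

theorem hasEigenvalue_iff_exists_ne_zero {R M : Type*} [CommRing R] [AddCommGroup M] [Module R M]
    {f : Module.End R M} {c : R} : f.HasEigenvalue c ↔ ∃ x ≠ 0, f x = c • x := by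
  constructor
  · intro h
    obtain ⟨x, hx⟩ := h.exists_hasEigenvector
    exact ⟨x, hx.2, hx.apply_eq_smul⟩
  · rintro ⟨x, hx, hfx⟩
    exact Module.End.hasEigenvalue_of_hasEigenvector
      (Module.End.hasEigenvector_iff.2 ⟨Module.End.mem_eigenspace_iff.2 hfx, hx⟩)

theorem exists_finrank_eq_one_map_eq_iff_hasEigenvalue {K V : Type*} [Field K] [AddCommGroup V]
    [Module K V] (f : Module.End K V) :
    (∃ L : Submodule K V, Module.finrank K L = 1 ∧ L.map f = L) ↔ ∃ c ≠ 0, f.HasEigenvalue c := by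
  constructor
  · rintro ⟨L, hL, hfL⟩
    obtain ⟨x, hxL, hx, hLx⟩ :=
      (rank_submodule_eq_one_iff L).1 (Module.rank_eq_one_iff_finrank_eq_one.2 hL)
    obtain rfl : K ∙ x = L := le_antisymm ((Submodule.span_singleton_le_iff_mem x L).2 hxL) hLx
    rw [Submodule.map_span, Set.image_singleton] at hfL
    obtain ⟨c, hc⟩ := Submodule.span_singleton_eq_span_singleton.1 hfL.symm
    exact ⟨c, c.ne_zero, hasEigenvalue_iff_exists_ne_zero.2 ⟨x, hx, hc.symm⟩⟩
  · rintro ⟨c, hc, hcf⟩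
    obtain ⟨x, hx, hfx⟩ := hasEigenvalue_iff_exists_ne_zero.1 hcf
    refine ⟨K ∙ x, finrank_span_singleton hx, ?_⟩
    rw [Submodule.map_span, Set.image_singleton, hfx, Submodule.span_singleton_smul_eq hc.isUnit]

theorem qrot_apply (z y x : ℍ[ℝ]) : qrot z y x = star z * x * y := rfl

theorem qrot_apply_eq_smul_iff {z : ℍ[ℝ]} (hz : z ≠ 0) (y x : ℍ[ℝ]) (c : ℝ) :
    qrot z y x = (c * normSq z) • x ↔ x * y = c • (z * x) := by
  have hstar : star z * (c • (z * x)) = (c * normSq z) • x := by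
    rw [mul_smul_comm, ← mul_assoc, Quaternion.star_mul_self, Quaternion.coe_mul_eq_smul,
      smul_smul]
  rw [qrot_apply, ← hstar, mul_assoc, mul_right_inj' (star_ne_zero.2 hz)]

theorem hasEigenvalue_qrot_mul_normSq_iff {z : ℍ[ℝ]} (hz : z ≠ 0) (y : ℍ[ℝ]) (c : ℝ) :
    Module.End.HasEigenvalue (qrot z y) (c * normSq z) ↔ ∃ x ≠ 0, x * y * x⁻¹ = c • z := by
  rw [hasEigenvalue_iff_exists_ne_zero]
  refine exists_congr fun x => and_congr_right fun hx => ?_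
  rw [qrot_apply_eq_smul_iff hz, mul_inv_eq_iff_eq_mul₀ hx, smul_mul_assoc]

theorem exists_invariant_line_qrot_iff {z : ℍ[ℝ]} (hz : z ≠ 0) (y : ℍ[ℝ]) :
    (∃ L : Submodule ℝ ℍ[ℝ], Module.finrank ℝ L = 1 ∧ L.map (qrot z y) = L) ↔
      ∃ c : ℝ, c ≠ 0 ∧ ∃ x ≠ 0, x * y * x⁻¹ = c • z := by
  have hN : normSq z ≠ 0 := normSq_ne_zero.2 hz
  simp only [exists_finrank_eq_one_map_eq_iff_hasEigenvalue,
    ← hasEigenvalue_qrot_mul_normSq_iff hz]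
  constructor
  · rintro ⟨c, hc, h⟩
    exact ⟨c / normSq z, div_ne_zero hc hN, by rwa [div_mul_cancel₀ c hN]⟩
  · rintro ⟨c, hc, h⟩
    exact ⟨c * normSq z, mul_ne_zero hc hN, h⟩

theorem norm_eq_one_of_conj_eq_smul {𝕜 D : Type*} [NormedField 𝕜] [NormedDivisionRing D]
    [NormedSpace 𝕜 D] {x y z : D} {c : 𝕜} (hx : x ≠ 0) (hz : z ≠ 0) (hzy : ‖z‖ = ‖y‖)
    (h : x * y * x⁻¹ = c • z) : ‖c‖ = 1 := by
  have hnorm : ‖z‖ = ‖c‖ * ‖z‖ :=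
    calc ‖z‖ = ‖x * y * x⁻¹‖ := by
          rw [norm_mul, norm_mul, norm_inv, mul_right_comm,
            mul_inv_cancel₀ (norm_ne_zero_iff.2 hx), one_mul, hzy]
      _ = ‖c‖ * ‖z‖ := by rw [h, norm_smul]
  exact (right_eq_mul₀ (norm_ne_zero_iff.2 hz)).1 hnorm

theorem stmt_0_general {z y : ℍ[ℝ]} (hz : z ≠ 0) (hzy : ‖z‖ = ‖y‖) :
    (∃ L : Submodule ℝ ℍ[ℝ], Module.finrank ℝ L = 1 ∧ L.map (qrot z y) = L) ↔
      ∃ x : ℍ[ℝ], x ≠ 0 ∧ (z = x * y * x⁻¹ ∨ z = -(x * y * x⁻¹)) := by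
  rw [exists_invariant_line_qrot_iff hz]
  constructor
  · rintro ⟨c, -, x, hx, h⟩
    refine ⟨x, hx, ?_⟩
    rcases eq_or_eq_neg_of_abs_eq (norm_eq_one_of_conj_eq_smul hx hz hzy h) with rfl | rfl
    · exact .inl (by rw [h, one_smul])
    · exact .inr (by rw [h, neg_one_smul, neg_neg])
  · rintro ⟨x, hx, h | h⟩
    · exact ⟨1, one_ne_zero, x, hx, by rw [one_smul, ← h]⟩
    · exact ⟨-1, neg_ne_zero.2 one_ne_zero, x, hx, by rw [neg_one_smul, h, neg_neg]⟩

/-- If `z` and `y` are unit quaternions, then the isometry `[z,y] : x ↦ z̄ x y` of `ℍ` has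
no invariant 1-dimensional ℝ-subspace if and only if `z` is not conjugate in `ℍˣ` to `y` or
to `-y`; equivalently, `[z,y]` has an invariant 1-dimensional subspace iff there is a nonzero
quaternion `x` with `z = x y x⁻¹` or `z = -(x y x⁻¹)`. -/
theorem stmt_0 (z y : ℍ[ℝ]) (hz : ‖z‖ = 1) (hy : ‖y‖ = 1) :
    ((¬ ∃ L : Submodule ℝ ℍ[ℝ], Module.finrank ℝ L = 1 ∧ L.map (qrot z y) = L) ↔
      ¬ ∃ x : ℍ[ℝ], x ≠ 0 ∧ (z = x * y * x⁻¹ ∨ z = -(x * y * x⁻¹))) ∧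
    ((∃ L : Submodule ℝ ℍ[ℝ], Module.finrank ℝ L = 1 ∧ L.map (qrot z y) = L) ↔
      ∃ x : ℍ[ℝ], x ≠ 0 ∧ (z = x * y * x⁻¹ ∨ z = -(x * y * x⁻¹))) := by
  have hz0 : z ≠ 0 := norm_ne_zero_iff.1 (hz ▸ one_ne_zero)
  have hline := stmt_0_general hz0 (hz.trans hy.symm)
  exact ⟨not_congr hline, hline⟩
end
end

section
/- For unit quaternions z₁, w₁, z₂, w₂, the maps x ↦ z̄₁ x w₁ and x ↦ z̄₂ x w₂ on ℍ are equal if and only if (z₁, w₁) = (z₂, w₂) or (z₁, w₁) = (−z₂, −w₂). -/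
open Quaternion

/-!
If `z̄₁ x w₁ = z̄₂ x w₂` for all `x`, then `r = z̄₂⁻¹ z̄₁` satisfies `r x w₁ = x w₂`. Taking `x = 1`
gives `w₂ = r w₁`, so `r x = x r` for all `x`: the quaternion `r` is central, hence a scalar.
Comparing norms in `z₁ = r z₂` leaves `r = ±1`.
-/

theorem forall_mul_mul_eq_mul_mul_iff {M : Type*} [Monoid M] {a b c d : M}
    (hb : IsUnit b) (hc : IsUnit c) :
    (∀ x, a * x * b = c * x * d) ↔ ∃ r ∈ Set.center M, a = c * r ∧ d = r * b := by
  simp only [Semigroup.mem_center_iff]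
  constructor
  · intro h
    obtain ⟨r, rfl⟩ : ∃ r, a = c * r := hc.dvd
    have intertwines (x : M) : r * x * b = x * d := hc.mul_left_cancel <| by
      simpa only [mul_assoc] using h x
    have hd : d = r * b := by simpa only [mul_one, one_mul] using (intertwines 1).symm
    refine ⟨r, fun x ↦ hb.mul_right_cancel ?_, rfl, hd⟩
    rw [intertwines, hd, mul_assoc]
  · rintro ⟨r, hr, rfl, rfl⟩ x
    rw [mul_assoc c r x, ← hr x]
    simp only [mul_assoc]

section

variable {R : Type*} [CommRing R] [NoZeroDivisors R] [NeZero (2 : R)]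

-- The commutator of `p` and `q` is twice the cross product of their imaginary parts.
theorem quaternion_commute_iff {p q : ℍ[R]} :
    Commute p q ↔ p.imJ * q.imK = p.imK * q.imJ ∧ p.imK * q.imI = p.imI * q.imK ∧
      p.imI * q.imJ = p.imJ * q.imI := by
  simp only [commute_iff_eq, Quaternion.ext_iff, re_mul, imI_mul, imJ_mul, imK_mul]
  constructor
  · rintro ⟨-, hI, hJ, hK⟩
    refine ⟨?_, ?_, ?_⟩ <;> apply mul_left_cancel₀ (two_ne_zero (α := R))
    · linear_combination hI
    · linear_combination hJ
    · linear_combination hK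
  · rintro ⟨hI, hJ, hK⟩
    refine ⟨?_, ?_, ?_, ?_⟩
    · ring
    · linear_combination 2 * hI
    · linear_combination 2 * hJ
    · linear_combination 2 * hK

theorem quaternion_mem_center_iff {q : ℍ[R]} : q ∈ Set.center ℍ[R] ↔ q = q.re := by
  rw [Semigroup.mem_center_iff]
  constructor
  · intro h
    obtain ⟨-, hK, hJ⟩ := quaternion_commute_iff.mp (h ⟨0, 1, 0, 0⟩)
    obtain ⟨-, -, hI⟩ := quaternion_commute_iff.mp (h ⟨0, 0, 1, 0⟩)
    simp only [zero_mul, one_mul] at hI hJ hK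
    ext <;> simp [← hI, hJ, ← hK]
  · intro h x
    rw [h, coe_commutes]

theorem forall_star_mul_mul_eq_iff_exists_smul {z₁ w₁ z₂ w₂ : ℍ[R]}
    (hw₁ : IsUnit w₁) (hz₂ : IsUnit z₂) :
    (∀ x, star z₁ * x * w₁ = star z₂ * x * w₂) ↔ ∃ r : R, z₁ = r • z₂ ∧ w₂ = r • w₁ := by
  rw [forall_mul_mul_eq_mul_mul_iff hw₁ hz₂.star]
  constructor
  · rintro ⟨q, hq, hz, hw⟩
    rw [quaternion_mem_center_iff] at hq
    rw [hq, mul_coe_eq_smul, ← Quaternion.star_smul, star_inj] at hz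
    rw [hq, coe_mul_eq_smul] at hw
    exact ⟨q.re, hz, hw⟩
  · rintro ⟨r, rfl, rfl⟩
    refine ⟨r, quaternion_mem_center_iff.mpr (by rw [re_coe]), ?_, ?_⟩
    · rw [Quaternion.star_smul, mul_coe_eq_smul]
    · rw [coe_mul_eq_smul]

theorem stmt_2_general {z₁ w₁ z₂ w₂ : ℍ[R]} (hw₁ : IsUnit w₁) (hz₂ : IsUnit z₂)
    (hz : normSq z₁ = normSq z₂) :
    (∀ x, star z₁ * x * w₁ = star z₂ * x * w₂) ↔
      ((z₁, w₁) = (z₂, w₂) ∨ (z₁, w₁) = (-z₂, -w₂)) := by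
  simp only [forall_star_mul_mul_eq_iff_exists_smul hw₁ hz₂, Prod.mk.injEq]
  constructor
  · rintro ⟨r, rfl, rfl⟩
    have r_sq : r ^ 2 = 1 := (hz₂.map normSq).mul_right_cancel <| by
      rw [← normSq_smul, hz, one_mul]
    rcases sq_eq_one_iff.mp r_sq with rfl | rfl <;> simp
  · rintro (⟨rfl, rfl⟩ | ⟨rfl, rfl⟩)
    · exact ⟨1, by simp⟩
    · exact ⟨-1, by simp⟩

end

/-- For unit quaternions `z₁, w₁, z₂, w₂`, the maps `x ↦ z̄₁ x w₁` and `x ↦ z̄₂ x w₂` on `ℍ`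
are equal if and only if `(z₁, w₁) = (z₂, w₂)` or `(z₁, w₁) = (−z₂, −w₂)`. -/
theorem stmt_2 (z₁ w₁ z₂ w₂ : ℍ[ℝ]) (hz₁ : ‖z₁‖ = 1) (hw₁ : ‖w₁‖ = 1)
    (hz₂ : ‖z₂‖ = 1) (hw₂ : ‖w₂‖ = 1) :
    (∀ x : ℍ[ℝ], star z₁ * x * w₁ = star z₂ * x * w₂) ↔
      ((z₁, w₁) = (z₂, w₂) ∨ (z₁, w₁) = (-z₂, -w₂)) :=
  have isUnit_of_norm_eq_one {q : ℍ[ℝ]} (hq : ‖q‖ = 1) : IsUnit q :=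
    (norm_ne_zero_iff.mp (hq ▸ one_ne_zero)).isUnit
  stmt_2_general (isUnit_of_norm_eq_one hw₁) (isUnit_of_norm_eq_one hz₂)
    (by simp only [normSq_eq_norm_mul_self, hz₁, hz₂])
end

section
/- Let m and n be integers with m ≥ 3 and n ≥ 3. Set z = exp(π(1/n + 1/m)·i) = cos(π(1/n+1/m)) + sin(π(1/n+1/m))·i and w = exp(π(1/n − 1/m)·i) = cos(π(1/n−1/m)) + sin(π(1/n−1/m))·i, unit quaternions. Then the ℝ-linear isometry [z,w] of ℍ given by x ↦ z̄ x w has no invariant 1-dimensional ℝ-subspace (equivalently, no real eigenvector). -/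
open Quaternion

noncomputable section

/-!
A real eigenvector `v` of `x ↦ z̄ x w` forces `w` to be, up to a real scalar, the conjugate of `z`
by `v`. Real parts are invariant under conjugation and norms are multiplicative, so for unit
quaternions `(re w)² = (re z)²`. With `z = exp((x + y)i)` and `w = exp((x - y)i)` the difference of
the two squares is `sin (2x) sin (2y)`, which does not vanish for `x = π/n`, `y = π/m`.
-/

section Eigenvalue

variable {K V : Type*} [Field K] [AddCommGroup V] [Module K V]

theorem exists_hasEigenvector_of_finrank_eq_one {f : Module.End K V} {L : Submodule K V}
    (hL : Module.finrank K L = 1) (hf : L ∈ f.invtSubmodule) :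
    ∃ (c : K) (v : V), f.HasEigenvector c v := by
  obtain ⟨⟨v, hvL⟩, hv, hspan⟩ := finrank_eq_one_iff'.mp hL
  obtain ⟨c, hc⟩ := hspan ⟨f v, hf hvL⟩
  exact ⟨c, v, Module.End.mem_eigenspace_iff.mpr (congrArg Subtype.val hc).symm,
    fun h => hv (Subtype.ext h)⟩

end Eigenvalue

section RealPart

variable {R : Type*} [CommRing R]

theorem re_quaternion_mul_comm (a b : ℍ[R]) : (a * b).re = (b * a).re := by
  simp only [re_mul]
  ring

theorem re_star_mul_mul_self (v z : ℍ[R]) : (star v * z * v).re = normSq v * z.re := by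
  rw [mul_assoc, re_quaternion_mul_comm, mul_assoc, self_mul_star,
    re_quaternion_mul_comm, coe_mul_eq_smul, re_smul, smul_eq_mul]

end RealPart

section TwoSidedMultiplication

variable {R : Type*} [CommRing R] [LinearOrder R] [IsStrictOrderedRing R] {z w v : ℍ[R]} {c : R}

theorem normSq_mul_normSq_of_star_mul_mul_eq_smul (hv : v ≠ 0) (h : star z * v * w = c • v) :
    normSq z * normSq w = c ^ 2 := by
  have h_norm := congrArg normSq h
  rw [map_mul, map_mul, normSq_star, normSq_smul] at h_norm
  refine mul_right_cancel₀ (normSq_ne_zero.mpr hv) ?_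
  linear_combination h_norm

theorem normSq_mul_re_of_star_mul_mul_eq_smul (hv : v ≠ 0) (h : star z * v * w = c • v) :
    normSq z * w.re = c * z.re := by
  have h_conj : (normSq z * normSq v) • w = c • (star v * z * v) := calc
    (normSq z * normSq v) • w = star v * ((normSq z : R) : ℍ[R]) * v * w := by
        rw [← coe_commutes, mul_assoc ((normSq z : R) : ℍ[R]),
          star_mul_self, ← coe_mul, coe_mul_eq_smul]
    _ = star v * z * (star z * v * w) := by simp only [← self_mul_star, mul_assoc]
    _ = c • (star v * z * v) := by rw [h, mul_smul_comm]
  have h_re := congrArg QuaternionAlgebra.re h_conj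
  rw [re_smul, re_smul, re_star_mul_mul_self, smul_eq_mul, smul_eq_mul] at h_re
  refine mul_right_cancel₀ (normSq_ne_zero.mpr hv) ?_
  linear_combination h_re

theorem re_sq_mul_normSq_of_star_mul_mul_eq_smul (hv : v ≠ 0) (h : star z * v * w = c • v) :
    z.re ^ 2 * normSq w = w.re ^ 2 * normSq z := by
  rcases eq_or_ne z 0 with rfl | hz
  · simp
  have h_norm := normSq_mul_normSq_of_star_mul_mul_eq_smul hv h
  have h_re := normSq_mul_re_of_star_mul_mul_eq_smul hv h
  refine mul_left_cancel₀ (normSq_ne_zero.mpr hz) ?_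
  calc normSq z * (z.re ^ 2 * normSq w)
      = (c * z.re) ^ 2 := by linear_combination z.re ^ 2 * h_norm
    _ = (normSq z * w.re) ^ 2 := by rw [h_re]
    _ = normSq z * (w.re ^ 2 * normSq z) := by ring

end TwoSidedMultiplication

theorem re_sq_mul_normSq_of_mem_invtSubmodule_qrot {z w : ℍ[ℝ]} {L : Submodule ℝ ℍ[ℝ]}
    (hL : Module.finrank ℝ L = 1) (h : L ∈ Module.End.invtSubmodule (qrot z w)) :
    z.re ^ 2 * normSq w = w.re ^ 2 * normSq z := by
  obtain ⟨c, v, hv⟩ := exists_hasEigenvector_of_finrank_eq_one hL h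
  exact re_sq_mul_normSq_of_star_mul_mul_eq_smul hv.2 hv.apply_eq_smul

theorem normSq_cos_sin (θ : ℝ) : normSq (⟨Real.cos θ, Real.sin θ, 0, 0⟩ : ℍ[ℝ]) = 1 :=
  (normSq_def' _).trans (by simp)

theorem cos_sub_sq_sub_cos_add_sq (x y : ℝ) :
    Real.cos (x - y) ^ 2 - Real.cos (x + y) ^ 2 = Real.sin (2 * x) * Real.sin (2 * y) := by
  rw [Real.cos_sub, Real.cos_add, Real.sin_two_mul, Real.sin_two_mul]
  ring

theorem sin_two_mul_pi_div_pos {t : ℝ} (ht : 2 < t) : 0 < Real.sin (2 * (Real.pi / t)) := by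
  have ht_pos : 0 < t := by linarith
  apply Real.sin_pos_of_pos_of_lt_pi
  · positivity
  · calc 2 * (Real.pi / t) = Real.pi * (2 / t) := by ring
      _ < Real.pi := mul_lt_of_lt_one_right Real.pi_pos ((div_lt_one ht_pos).mpr ht)

theorem stmt_3_general (m n : ℝ) (hm : 2 < m) (hn : 2 < n) :
    ¬ ∃ L : Submodule ℝ ℍ[ℝ], Module.finrank ℝ L = 1 ∧
      L.map (qrot
        ⟨Real.cos (Real.pi * (1 / n + 1 / m)), Real.sin (Real.pi * (1 / n + 1 / m)), 0, 0⟩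
        ⟨Real.cos (Real.pi * (1 / n - 1 / m)), Real.sin (Real.pi * (1 / n - 1 / m)), 0, 0⟩) =
        L := by
  rintro ⟨L, hL, hmap⟩
  have h_re := re_sq_mul_normSq_of_mem_invtSubmodule_qrot hL
    ((Module.End.mem_invtSubmodule_iff_map_le _).mpr hmap.le)
  simp only [normSq_cos_sin, mul_one, mul_add, mul_sub, mul_one_div] at h_re
  have h_sin := cos_sub_sq_sub_cos_add_sq (Real.pi / n) (Real.pi / m)
  rw [h_re, sub_self] at h_sin
  exact (mul_pos (sin_two_mul_pi_div_pos hn) (sin_two_mul_pi_div_pos hm)).ne h_sin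

/-- For integers `m, n ≥ 3`, with `z = exp(π(1/n + 1/m)·i)` and `w = exp(π(1/n − 1/m)·i)`,
the isometry `[z,w] : x ↦ z̄ x w` of `ℍ` has no invariant 1-dimensional ℝ-subspace. -/
theorem stmt_3 (m n : ℤ) (hm : 3 ≤ m) (hn : 3 ≤ n) :
    ¬ ∃ L : Submodule ℝ ℍ[ℝ], Module.finrank ℝ L = 1 ∧
      L.map (qrot
        ⟨Real.cos (Real.pi * (1 / (n : ℝ) + 1 / (m : ℝ))),
          Real.sin (Real.pi * (1 / (n : ℝ) + 1 / (m : ℝ))), 0, 0⟩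
        ⟨Real.cos (Real.pi * (1 / (n : ℝ) - 1 / (m : ℝ))),
          Real.sin (Real.pi * (1 / (n : ℝ) - 1 / (m : ℝ))), 0, 0⟩) = L := by
  have two_lt {k : ℤ} (hk : 3 ≤ k) : (2 : ℝ) < k := by exact_mod_cast hk
  exact stmt_3_general m n (two_lt hm) (two_lt hn)
end
end

section
/- Every element of the group K (the subgroup of ℝ-linear isometries of ℍ generated by k₁ : x ↦ −x̄ i and k₂ : x ↦ −j x̄ k) has a real eigenvalue: for every g ∈ K there exist a nonzero x ∈ ℍ and a real number c with g(x) = c·x. -/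
/-!
In a group generated by `a` and `b` with `a⁴ = b⁴ = (ab)² = 1` and `a²` commuting with `b`, both
squares are central, so every element is `aⁱbʲ` and its square depends only on the parities of
`i` and `j`: it is `1`, `a²` or `b²`. The generators `k₁`, `k₂` satisfy these relations, with
`k₁² : x ↦ −i x i` fixing `1` and `k₂² : x ↦ i x i` fixing `j`. Hence the square of each `g ∈ K`
fixes some `x ≠ 0`: either `g x = -x`, or `g x + x` is a nonzero fixed vector of `g`.
-/

open Quaternion

noncomputable section

def qi : ℍ[ℝ] := ⟨0, 1, 0, 0⟩
def qj : ℍ[ℝ] := ⟨0, 0, 1, 0⟩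
def qk : ℍ[ℝ] := ⟨0, 0, 0, 1⟩

lemma norm_qi : ‖qi‖ = 1 := by
  have h : normSq qi = 1 := by rw [Quaternion.normSq_def']; simp [qi]
  have h2 := Quaternion.normSq_eq_norm_mul_self qi
  nlinarith [norm_nonneg qi]

lemma norm_qj : ‖qj‖ = 1 := by
  have h : normSq qj = 1 := by rw [Quaternion.normSq_def']; simp [qj]
  have h2 := Quaternion.normSq_eq_norm_mul_self qj
  nlinarith [norm_nonneg qj]

lemma norm_qk : ‖qk‖ = 1 := by
  have h : normSq qk = 1 := by rw [Quaternion.normSq_def']; simp [qk]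
  have h2 := Quaternion.normSq_eq_norm_mul_self qk
  nlinarith [norm_nonneg qk]

/-- Build a linear isometry equivalence of `ℍ[ℝ]` from a norm-preserving linear map. -/
def toIso (f : ℍ[ℝ] →ₗ[ℝ] ℍ[ℝ]) (h : ∀ x, ‖f x‖ = ‖x‖) : ℍ[ℝ] ≃ₗᵢ[ℝ] ℍ[ℝ] :=
  LinearIsometryEquiv.ofSurjective ⟨f, h⟩
    (LinearMap.injective_iff_surjective.mp (LinearIsometry.injective ⟨f, h⟩))

/-- k₁ : x ↦ −x̄ i -/
def k1 : ℍ[ℝ] ≃ₗᵢ[ℝ] ℍ[ℝ] :=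
  toIso
    { toFun := fun x => -(star x * qi)
      map_add' := fun x y => by simp [star_add, add_mul, add_comm]
      map_smul' := fun r x => by simp [Quaternion.star_smul, smul_mul_assoc] }
    (fun x => by simp [norm_mul, Quaternion.norm_star, norm_qi])

/-- k₂ : x ↦ −j x̄ k -/
def k2 : ℍ[ℝ] ≃ₗᵢ[ℝ] ℍ[ℝ] :=
  toIso
    { toFun := fun x => -(qj * star x * qk)
      map_add' := fun x y => by simp [star_add, mul_add, add_mul, add_comm]
      map_smul' := fun r x => by
        simp [Quaternion.star_smul, smul_mul_assoc, mul_smul_comm] }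
    (fun x => by simp [norm_mul, Quaternion.norm_star, norm_qj, norm_qk])

@[simp] lemma k1_apply (x : ℍ[ℝ]) : k1 x = -(star x * qi) := rfl
@[simp] lemma k2_apply (x : ℍ[ℝ]) : k2 x = -(qj * star x * qk) := rfl

/-- The group `K`. -/
def K : Subgroup (ℍ[ℝ] ≃ₗᵢ[ℝ] ℍ[ℝ]) := Subgroup.closure {k1, k2}

lemma mul_mul_sq_eq_sq {M : Type*} [Monoid M] {c d t : M} (hc : c ^ 2 = 1) (hd : d ^ 2 = 1)
    (hct : Commute c t) (htd : Commute t d) (hcd : Commute c d) : (c * t * d) ^ 2 = t ^ 2 := by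
  rw [(hcd.mul_left htd).mul_pow, hct.mul_pow, hc, hd, one_mul, mul_one]

section Group

variable {G : Type*} [Group G] {a b g : G}

lemma inv_eq_pow_three (ha : a ^ 4 = 1) : a⁻¹ = a ^ 3 :=
  inv_eq_of_mul_eq_one_right (by rw [← pow_succ', ha])

lemma mul_eq_pow_three_mul_pow_three (ha : a ^ 4 = 1) (hb : b ^ 4 = 1) (hab : (a * b) ^ 2 = 1) :
    b * a = a ^ 3 * b ^ 3 := by
  rw [← inv_eq_pow_three ha, ← inv_eq_pow_three hb, eq_inv_mul_iff_mul_eq,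
    eq_inv_iff_mul_eq_one, ← hab, sq]
  simp only [mul_assoc]

lemma commute_sq_right_of_commute_sq_left (ha : a ^ 4 = 1) (hb : b ^ 4 = 1)
    (hab : (a * b) ^ 2 = 1) (hcomm : Commute (a ^ 2) b) : Commute a (b ^ 2) := by
  have hba := mul_eq_pow_three_mul_pow_three ha hb hab
  symm
  calc b ^ 2 * a = b * (b * a) := by rw [sq, mul_assoc]
    _ = b * (a ^ 2 * a) * b ^ 3 := by rw [hba, ← pow_succ, mul_assoc]
    _ = a ^ 2 * (b * a) * b ^ 3 := by rw [← mul_assoc, ← hcomm.eq, mul_assoc (a ^ 2)]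
    _ = (a ^ 2 * a ^ 3) * (b ^ 3 * b ^ 3) := by rw [hba]; simp only [mul_assoc]
    _ = (a ^ 4 * a) * (b ^ 4 * b ^ 2) := by simp only [← pow_add, ← pow_succ]
    _ = a * b ^ 2 := by rw [ha, hb, one_mul, one_mul]

lemma exists_mul_pow_eq_pow_mul_pow (ha : a ^ 4 = 1) (hb : b ^ 4 = 1) (hab : (a * b) ^ 2 = 1)
    (hcomm : Commute (a ^ 2) b) (i : ℕ) : ∃ m n : ℕ, b * a ^ i = a ^ m * b ^ n := by
  obtain ⟨q, rfl | rfl⟩ := i.even_or_odd'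
  · refine ⟨2 * q, 1, ?_⟩
    rw [pow_one, pow_mul, (hcomm.pow_left q).eq]
  · refine ⟨2 * q + 3, 3, ?_⟩
    calc b * a ^ (2 * q + 1) = b * (a ^ 2) ^ q * a := by rw [pow_succ, pow_mul, mul_assoc]
      _ = (a ^ 2) ^ q * (b * a) := by rw [← (hcomm.pow_left q).eq, mul_assoc]
      _ = a ^ (2 * q + 3) * b ^ 3 := by
        rw [mul_eq_pow_three_mul_pow_three ha hb hab, ← pow_mul, pow_add, mul_assoc]

lemma exists_eq_pow_mul_pow_of_mem_closure_pair (ha : a ^ 4 = 1) (hb : b ^ 4 = 1)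
    (hab : (a * b) ^ 2 = 1) (hcomm : Commute (a ^ 2) b) (hg : g ∈ Subgroup.closure {a, b}) :
    ∃ i j : ℕ, g = a ^ i * b ^ j := by
  have generator_mul : ∀ x ∈ ({a, b} : Set G), ∀ y, (∃ i j : ℕ, y = a ^ i * b ^ j) →
      ∃ i j : ℕ, x * y = a ^ i * b ^ j := by
    rintro x (rfl | rfl) _ ⟨i, j, rfl⟩
    · exact ⟨i + 1, j, by rw [pow_succ', mul_assoc]⟩
    · obtain ⟨m, n, hmn⟩ := exists_mul_pow_eq_pow_mul_pow ha hb hab hcomm i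
      exact ⟨m, n + j, by rw [← mul_assoc, hmn, pow_add, mul_assoc]⟩
  have generator_pow_four : ∀ x ∈ ({a, b} : Set G), x ^ 4 = 1 := by
    rintro x (rfl | rfl)
    exacts [ha, hb]
  induction hg using Subgroup.closure_induction_left with
  | one => exact ⟨0, 0, by simp⟩
  | mul_left x hx y _ ih => exact generator_mul x hx y ih
  | inv_mul_cancel x hx y _ ih =>
    rw [inv_eq_pow_three (generator_pow_four x hx), pow_three, mul_assoc, mul_assoc]
    exact generator_mul x hx _ (generator_mul x hx _ (generator_mul x hx _ ih))

theorem sq_eq_of_mem_closure_pair (ha : a ^ 4 = 1) (hb : b ^ 4 = 1) (hab : (a * b) ^ 2 = 1)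
    (hcomm : Commute (a ^ 2) b) (hg : g ∈ Subgroup.closure {a, b}) :
    g ^ 2 = 1 ∨ g ^ 2 = a ^ 2 ∨ g ^ 2 = b ^ 2 := by
  have hcomm' := commute_sq_right_of_commute_sq_left ha hb hab hcomm
  have even_pow_sq {x : G} (hx : x ^ 4 = 1) (n : ℕ) : (x ^ (2 * n)) ^ 2 = 1 := by
    rw [← pow_mul, show 2 * n * 2 = 4 * n by ring, pow_mul, hx, one_pow]
  have sq_eq (m n : ℕ) {t : G} (hat : Commute (a ^ 2) t) (htb : Commute t (b ^ 2)) :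
      (a ^ (2 * m) * t * b ^ (2 * n)) ^ 2 = t ^ 2 := by
    refine mul_mul_sq_eq_sq (even_pow_sq ha m) (even_pow_sq hb n) ?_ ?_ ?_
    · exact pow_mul a 2 m ▸ hat.pow_left m
    · exact pow_mul b 2 n ▸ htb.pow_right n
    · exact pow_mul a 2 m ▸ (hcomm.pow_left m).pow_right (2 * n)
  have haa : Commute (a ^ 2) a := Commute.pow_self a 2
  have hbb : Commute b (b ^ 2) := Commute.self_pow b 2
  obtain ⟨i, j, rfl⟩ := exists_eq_pow_mul_pow_of_mem_closure_pair ha hb hab hcomm hg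
  obtain ⟨m, rfl | rfl⟩ := i.even_or_odd' <;> obtain ⟨n, rfl | rfl⟩ := j.even_or_odd'
  · left
    simpa using sq_eq m n (Commute.one_right _) (Commute.one_left _)
  · right; right
    simpa only [pow_succ', mul_assoc] using sq_eq m n hcomm hbb
  · right; left
    simpa only [pow_succ, mul_assoc] using sq_eq m n haa hcomm'
  · left
    rw [← hab, ← sq_eq m n (haa.mul_right hcomm) (hcomm'.mul_left hbb), pow_succ a, pow_succ' b]
    simp only [mul_assoc]

end Group

lemma exists_ne_zero_map_eq_or_map_eq_neg {M F : Type*} [AddCommGroup M] [FunLike F M M]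
    [AddMonoidHomClass F M M] {f : F} {x : M} (hx : x ≠ 0) (hfx : f (f x) = x) :
    ∃ y ≠ 0, f y = y ∨ f y = -y := by
  by_cases h : f x + x = 0
  · exact ⟨x, hx, Or.inr (eq_neg_of_add_eq_zero_left h)⟩
  · exact ⟨f x + x, h, Or.inl (by rw [map_add, hfx, add_comm])⟩

lemma mul_mul_mul_mul_eq_of_mul_self_eq_neg_one {M : Type*} [Monoid M] [HasDistribNeg M] {u : M}
    (hu : u * u = -1) (x : M) : u * (u * x * u) * u = x := by
  calc u * (u * x * u) * u = (u * u) * x * (u * u) := by simp only [mul_assoc]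
    _ = x := by rw [hu, neg_one_mul, neg_mul_neg, mul_one]

lemma star_qi : star qi = -qi := star_eq_neg.mpr rfl

lemma star_qj : star qj = -qj := star_eq_neg.mpr rfl

lemma star_qk : star qk = -qk := star_eq_neg.mpr rfl

lemma qi_mul_qi : qi * qi = -1 := by ext <;> simp <;> simp [qi]

lemma qk_mul_qk : qk * qk = -1 := by ext <;> simp <;> simp [qk]

lemma qi_mul_qj : qi * qj = qk := by ext <;> simp <;> simp [qi, qj, qk]

lemma qj_mul_qi : qj * qi = -qk := by ext <;> simp <;> simp [qi, qj, qk]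

lemma qj_mul_qk : qj * qk = qi := by ext <;> simp <;> simp [qi, qj, qk]

lemma qk_mul_qi : qk * qi = qj := by ext <;> simp <;> simp [qi, qj, qk]

lemma qi_mul_qk : qi * qk = -qj := by ext <;> simp <;> simp [qi, qj, qk]

lemma qj_ne_zero : qj ≠ 0 := norm_ne_zero_iff.mp (by rw [norm_qj]; exact one_ne_zero)

lemma k1_sq_apply (x : ℍ[ℝ]) : (k1 ^ 2) x = -(qi * x * qi) := by
  change k1 (k1 x) = _
  simp only [k1_apply, star_neg, star_mul, star_star, star_qi, neg_mul, neg_neg]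

lemma k2_sq_apply (x : ℍ[ℝ]) : (k2 ^ 2) x = qi * x * qi := by
  calc k2 (k2 x) = (qj * qk) * x * (qj * qk) := by
        simp only [k2_apply, star_neg, star_mul, star_star, star_qj, star_qk, neg_mul, mul_neg,
          neg_neg, mul_assoc]
    _ = qi * x * qi := by rw [qj_mul_qk]

lemma k1_mul_k2_apply (x : ℍ[ℝ]) : (k1 * k2) x = -(qk * x * qk) := by
  calc k1 (k2 x) = qk * x * (qj * qi) := by
        simp only [k1_apply, k2_apply, star_neg, star_mul, star_star, star_qj, star_qk, neg_mul,
          mul_neg, neg_neg, mul_assoc]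
    _ = -(qk * x * qk) := by rw [qj_mul_qi, mul_neg]

lemma k1_pow_four : k1 ^ 4 = 1 := by
  ext1 x
  calc (k1 ^ 2) ((k1 ^ 2) x) = qi * (qi * x * qi) * qi := by
        simp only [k1_sq_apply, mul_neg, neg_mul, neg_neg]
    _ = x := mul_mul_mul_mul_eq_of_mul_self_eq_neg_one qi_mul_qi x

lemma k2_pow_four : k2 ^ 4 = 1 := by
  ext1 x
  calc (k2 ^ 2) ((k2 ^ 2) x) = qi * (qi * x * qi) * qi := by simp only [k2_sq_apply]
    _ = x := mul_mul_mul_mul_eq_of_mul_self_eq_neg_one qi_mul_qi x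

lemma k1_mul_k2_sq : (k1 * k2) ^ 2 = 1 := by
  ext1 x
  calc (k1 * k2) ((k1 * k2) x) = qk * (qk * x * qk) * qk := by
        simp only [k1_mul_k2_apply, mul_neg, neg_mul, neg_neg]
    _ = x := mul_mul_mul_mul_eq_of_mul_self_eq_neg_one qk_mul_qk x

lemma commute_k1_sq_k2 : Commute (k1 ^ 2) k2 := by
  ext1 x
  calc (k1 ^ 2) (k2 x) = (qi * qj) * star x * (qk * qi) := by
        simp only [k1_sq_apply, k2_apply, mul_neg, neg_mul, neg_neg, mul_assoc]
    _ = (qj * qi) * star x * (qi * qk) := by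
        rw [qi_mul_qj, qk_mul_qi, qj_mul_qi, qi_mul_qk, neg_mul, neg_mul_neg]
    _ = k2 ((k1 ^ 2) x) := by
        simp only [k1_sq_apply, k2_apply, star_neg, star_mul, star_qi, mul_neg, neg_mul, neg_neg,
          mul_assoc]

lemma k1_sq_one : (k1 ^ 2) (1 : ℍ[ℝ]) = 1 := by
  rw [k1_sq_apply, mul_one, qi_mul_qi, neg_neg]

lemma k2_sq_qj : (k2 ^ 2) qj = qj := by
  rw [k2_sq_apply, qi_mul_qj, qk_mul_qi]

lemma exists_ne_zero_apply_apply_eq_self_of_mem_K {g : ℍ[ℝ] ≃ₗᵢ[ℝ] ℍ[ℝ]} (hg : g ∈ K) :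
    ∃ x ≠ 0, g (g x) = x := by
  change ∃ x ≠ 0, (g ^ 2) x = x
  obtain h | h | h :=
    sq_eq_of_mem_closure_pair k1_pow_four k2_pow_four k1_mul_k2_sq commute_k1_sq_k2 hg
  · exact ⟨1, one_ne_zero, by rw [h]; rfl⟩
  · exact ⟨1, one_ne_zero, by rw [h, k1_sq_one]⟩
  · exact ⟨qj, qj_ne_zero, by rw [h, k2_sq_qj]⟩

/-- Every element of the group `K` generated by `k₁ : x ↦ −x̄ i` and `k₂ : x ↦ −j x̄ k`
has a real eigenvalue. -/
theorem stmt_4 : ∀ g ∈ K, ∃ x : ℍ[ℝ], x ≠ 0 ∧ ∃ c : ℝ, g x = c • x := by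
  intro g hg
  obtain ⟨x, hx, hgx⟩ := exists_ne_zero_apply_apply_eq_self_of_mem_K hg
  obtain ⟨y, hy, h | h⟩ := exists_ne_zero_map_eq_or_map_eq_neg hx hgx
  · exact ⟨y, hy, 1, by rw [h, one_smul]⟩
  · exact ⟨y, hy, -1, by rw [h, neg_one_smul]⟩
end
end

section
/- There is no 1-dimensional ℝ-subspace of ℍ that is invariant under both k₁ : x ↦ −x̄ i and k₂ : x ↦ −j x̄ k; equivalently, there is no nonzero x ∈ ℍ such that k₁(x) ∈ ℝ·x and k₂(x) ∈ ℝ·x. In particular, no 1-dimensional subspace of ℍ is invariant under every element of the group K generated by k₁ and k₂. -/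
open Quaternion

noncomputable section

/-! The squares of `k₁` and `k₂` are opposite: `k₁² x = -(i x i)`, whereas `k₂² x = i x i` because
`j k = i`. On a common eigenvector with eigenvalues `c` and `d` this forces `c² + d² = 0`, hence
`c = 0` over the reals, contradicting the injectivity of `k₁`. -/

lemma apply_eq_zero_of_apply_apply_eq_neg {R M F G : Type*} [Ring R] [LinearOrder R]
    [IsStrictOrderedRing R] [AddCommGroup M] [Module R M] [Module.IsTorsionFree R M]
    [FunLike F M M] [MulActionHomClass F R M M] [FunLike G M M] [MulActionHomClass G R M M]
    {f : F} {g : G} {x : M} {c d : R} (hfg : f (f x) = -g (g x))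
    (hf : f x = c • x) (hg : g x = d • x) : f x = 0 := by
  have h_smul : (c * c + d * d) • x = 0 := by
    simpa only [hf, hg, map_smul, smul_smul, ← add_smul, eq_neg_iff_add_eq_zero] using hfg
  rcases smul_eq_zero.mp h_smul with h_sq | hx
  · rw [hf, (mul_self_add_mul_self_eq_zero.mp h_sq).1, zero_smul]
  · rw [hf, hx, smul_zero]

lemma exists_ne_zero_forall_apply_eq_smul_of_finrank_eq_one {𝕜 V : Type*} [DivisionRing 𝕜]
    [AddCommGroup V] [Module 𝕜 V] {L : Submodule 𝕜 V} (hL : Module.finrank 𝕜 L = 1) :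
    ∃ v : V, v ≠ 0 ∧ ∀ f : V →ₗ[𝕜] V, L.map f ≤ L → ∃ c : 𝕜, f v = c • v := by
  obtain ⟨v, hv, hspan⟩ := finrank_eq_one_iff'.mp hL
  refine ⟨v, Subtype.coe_ne_coe.mpr hv, fun f hf => ?_⟩
  obtain ⟨c, hc⟩ := hspan ⟨f v, hf (Submodule.mem_map_of_mem v.2)⟩
  exact ⟨c, (congrArg Subtype.val hc).symm⟩

lemma k1_k1_apply (x : ℍ[ℝ]) : k1 (k1 x) = -(qi * x * qi) := by
  simp only [k1_apply, star_neg, star_mul, star_star, star_qi, neg_mul, neg_neg]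

lemma k2_k2_apply (x : ℍ[ℝ]) : k2 (k2 x) = qi * x * qi :=
  calc k2 (k2 x) = qj * qk * x * (qj * qk) := by
        simp only [k2_apply, star_neg, star_mul, star_star, star_qj, star_qk, neg_mul, mul_neg,
          neg_neg, mul_assoc]
    _ = qi * x * qi := by rw [qj_mul_qk]

lemma eq_zero_of_k1_apply_eq_smul_of_k2_apply_eq_smul {x : ℍ[ℝ]} {c d : ℝ}
    (h₁ : k1 x = c • x) (h₂ : k2 x = d • x) : x = 0 := by
  have h_sq : k1 (k1 x) = -k2 (k2 x) := by rw [k1_k1_apply, k2_k2_apply]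
  exact k1.map_eq_zero_iff.mp (apply_eq_zero_of_apply_apply_eq_neg h_sq h₁ h₂)

lemma finrank_ne_one_of_map_k1_le_of_map_k2_le {L : Submodule ℝ ℍ[ℝ]}
    (h₁ : L.map (k1.toLinearEquiv : ℍ[ℝ] →ₗ[ℝ] ℍ[ℝ]) ≤ L)
    (h₂ : L.map (k2.toLinearEquiv : ℍ[ℝ] →ₗ[ℝ] ℍ[ℝ]) ≤ L) : Module.finrank ℝ L ≠ 1 := by
  intro hL
  obtain ⟨v, hv, h_eigen⟩ := exists_ne_zero_forall_apply_eq_smul_of_finrank_eq_one hL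
  obtain ⟨c, hc⟩ := h_eigen _ h₁
  obtain ⟨d, hd⟩ := h_eigen _ h₂
  exact hv (eq_zero_of_k1_apply_eq_smul_of_k2_apply_eq_smul hc hd)

lemma k1_mem_K : k1 ∈ K := Subgroup.subset_closure (Set.mem_insert _ _)

lemma k2_mem_K : k2 ∈ K := Subgroup.subset_closure (Set.mem_insert_of_mem _ rfl)

/-- There is no 1-dimensional ℝ-subspace of `ℍ` invariant under both `k₁` and `k₂`;
equivalently, no nonzero `x` with `k₁ x ∈ ℝ·x` and `k₂ x ∈ ℝ·x`; in particular no
1-dimensional subspace is invariant under every element of `K`. -/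
theorem stmt_5 :
    (¬ ∃ L : Submodule ℝ ℍ[ℝ], Module.finrank ℝ L = 1 ∧
        L.map (k1.toLinearEquiv : ℍ[ℝ] →ₗ[ℝ] ℍ[ℝ]) = L ∧
        L.map (k2.toLinearEquiv : ℍ[ℝ] →ₗ[ℝ] ℍ[ℝ]) = L) ∧
    (¬ ∃ x : ℍ[ℝ], x ≠ 0 ∧ (∃ c : ℝ, k1 x = c • x) ∧ (∃ c : ℝ, k2 x = c • x)) ∧
    (¬ ∃ L : Submodule ℝ ℍ[ℝ], Module.finrank ℝ L = 1 ∧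
        ∀ g ∈ K, L.map (LinearIsometryEquiv.toLinearEquiv g : ℍ[ℝ] →ₗ[ℝ] ℍ[ℝ]) = L) := by
  refine ⟨?_, ?_, ?_⟩
  · rintro ⟨L, hL, h₁, h₂⟩
    exact finrank_ne_one_of_map_k1_le_of_map_k2_le h₁.le h₂.le hL
  · rintro ⟨x, hx, ⟨c, hc⟩, ⟨d, hd⟩⟩
    exact hx (eq_zero_of_k1_apply_eq_smul_of_k2_apply_eq_smul hc hd)
  · rintro ⟨L, hL, hK⟩
    exact finrank_ne_one_of_map_k1_le_of_map_k2_le (hK k1 k1_mem_K).le (hK k2 k2_mem_K).le hL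
end
end

section
/- The group K, i.e., the subgroup of ℝ-linear isometries of ℍ generated by k₁ : x ↦ −x̄ i and k₂ : x ↦ −j x̄ k, has order 16. -/
open Quaternion

noncomputable section

/-!
Write `a = k₁` and `b = k₂`. Both have order four, and `(ab)² = (ab⁻¹)² = 1`. These two relations
alone give `b a = a⁻¹ b⁻¹` and show that `b` inverts `a²`, so every element of `⟨a, b⟩` can be
rewritten as `aᵐ bⁿ`. The order is therefore `4 * 4` once `⟨a⟩ ∩ ⟨b⟩` is trivial. Every nontrivial
subgroup of `⟨b⟩ ≅ C₄` contains `b²`, and `b² ∉ ⟨a⟩` because `a` fixes the vector `1 - i` while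
`b² : x ↦ i x i` negates it.
-/

section TwoGenerators

open Subgroup
open scoped Pointwise

variable {G : Type*} [Group G] {a b : G}

lemma mul_eq_inv_mul_inv_of_mul_sq_eq_one (hab : (a * b) ^ 2 = 1) : b * a = a⁻¹ * b⁻¹ := by
  rw [← mul_inv_rev, eq_inv_iff_mul_eq_one]
  have h : b * (a * b) ^ 2 * b⁻¹ = 1 := by simp [hab]
  simpa [pow_two, mul_assoc] using h

lemma semiconjBy_sq_inv_of_mul_sq_eq_one (hab : (a * b) ^ 2 = 1) (hab' : (a * b⁻¹) ^ 2 = 1) :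
    SemiconjBy b (a ^ 2) (a ^ 2)⁻¹ := by
  have swap : b * a = a⁻¹ * b⁻¹ := mul_eq_inv_mul_inv_of_mul_sq_eq_one hab
  have swap' : b⁻¹ * a = a⁻¹ * b := by simpa using mul_eq_inv_mul_inv_of_mul_sq_eq_one hab'
  calc b * a ^ 2 = b * a * a := by rw [pow_two, mul_assoc]
    _ = a⁻¹ * (b⁻¹ * a) := by rw [swap, mul_assoc]
    _ = (a ^ 2)⁻¹ * b := by rw [swap', ← mul_assoc, ← mul_inv_rev, pow_two]

lemma mul_zpow_mem_zpowers_mul_zpowers (hab : (a * b) ^ 2 = 1) (hab' : (a * b⁻¹) ^ 2 = 1) (m : ℤ) :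
    b * a ^ m ∈ (zpowers a : Set G) * zpowers b := by
  have even_swap (k : ℤ) : b * (a ^ 2) ^ k = (a ^ 2)⁻¹ ^ k * b :=
    (semiconjBy_sq_inv_of_mul_sq_eq_one hab hab').zpow_right k
  have sq_mem (k : ℤ) : (a ^ 2)⁻¹ ^ k ∈ zpowers a :=
    zpow_mem (inv_mem (npow_mem_zpowers a 2)) k
  obtain ⟨k, rfl | rfl⟩ := Int.even_or_odd' m
  · rw [zpow_mul, zpow_ofNat, even_swap]
    exact Set.mul_mem_mul (sq_mem k) (mem_zpowers b)
  · rw [zpow_add_one, zpow_mul, zpow_ofNat, ← mul_assoc, even_swap, mul_assoc,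
      mul_eq_inv_mul_inv_of_mul_sq_eq_one hab, ← mul_assoc]
    exact Set.mul_mem_mul (mul_mem (sq_mem k) (inv_mem (mem_zpowers a)))
      (inv_mem (mem_zpowers b))

lemma coe_closure_pair_eq_zpowers_mul_zpowers (hab : (a * b) ^ 2 = 1) (hab' : (a * b⁻¹) ^ 2 = 1) :
    (closure {a, b} : Set G) = (zpowers a : Set G) * zpowers b := by
  set S : Set G := (zpowers a : Set G) * zpowers b
  have zpowers_mul_mem {c g : G} (hc : c ∈ zpowers a) (hg : g ∈ S) : c * g ∈ S := by
    obtain ⟨x, hx, y, hy, rfl⟩ := hg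
    exact ⟨c * x, mul_mem hc hx, y, hy, mul_assoc c x y⟩
  have mul_mem_of_mul_zpow_mem {c g : G} (hc : ∀ m : ℤ, c * a ^ m ∈ S) (hg : g ∈ S) :
      c * g ∈ S := by
    obtain ⟨_, ⟨m, rfl⟩, y, hy, rfl⟩ := hg
    obtain ⟨x, hx, z, hz, hxz⟩ := hc m
    exact ⟨x, hx, z * y, mul_mem hz hy, by simp only [← mul_assoc, ← hxz]⟩
  have b_mul_zpow_mem : ∀ m : ℤ, b * a ^ m ∈ S := mul_zpow_mem_zpowers_mul_zpowers hab hab'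
  have b_inv_mul_zpow_mem (m : ℤ) : b⁻¹ * a ^ m ∈ S := by
    simpa only [zpowers_inv] using
      mul_zpow_mem_zpowers_mul_zpowers hab' (by rwa [inv_inv]) m
  apply Set.Subset.antisymm
  · intro g hg
    induction hg using closure_induction_left with
    | one => exact ⟨1, one_mem _, 1, one_mem _, mul_one 1⟩
    | mul_left x hx y _ hy =>
      obtain rfl | rfl := hx
      · exact zpowers_mul_mem (mem_zpowers x) hy
      · exact mul_mem_of_mul_zpow_mem b_mul_zpow_mem hy
    | inv_mul_cancel x hx y _ hy =>
      obtain rfl | rfl := hx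
      · exact zpowers_mul_mem (inv_mem (mem_zpowers x)) hy
      · exact mul_mem_of_mul_zpow_mem b_inv_mul_zpow_mem hy
  · have ha : zpowers a ≤ closure {a, b} := zpowers_le.mpr (subset_closure (by simp))
    have hb : zpowers b ≤ closure {a, b} := zpowers_le.mpr (subset_closure (by simp))
    rintro _ ⟨x, hx, y, hy, rfl⟩
    exact mul_mem (ha hx) (hb hy)

lemma card_closure_pair_eq_orderOf_mul_orderOf (hab : (a * b) ^ 2 = 1)
    (hab' : (a * b⁻¹) ^ 2 = 1) (hdisj : Disjoint (zpowers a) (zpowers b)) :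
    Nat.card (closure {a, b}) = orderOf a * orderOf b := by
  have range_mul :
      Set.range (fun g : zpowers a × zpowers b => (g.1 * g.2 : G)) = closure {a, b} := by
    rw [coe_closure_pair_eq_zpowers_mul_zpowers hab hab']
    ext g
    simp only [Set.mem_range, Prod.exists, Subtype.exists, exists_prop, Set.mem_mul,
      SetLike.mem_coe]
  rw [← SetLike.coe_sort_coe, ← range_mul,
    Nat.card_range_of_injective (mul_injective_of_disjoint hdisj), Nat.card_prod,
    Nat.card_zpowers, Nat.card_zpowers]

lemma disjoint_zpowers_of_pow_prime_pow_notMem {p n : ℕ} (hp : p.Prime) {H : Subgroup G}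
    (ha : a ^ p ^ (n + 1) = 1) (haH : a ^ p ^ n ∉ H) : Disjoint (zpowers a) H := by
  rw [disjoint_def]
  rintro _ ⟨m, rfl⟩ hm
  obtain ⟨j, hj, hgcd⟩ : ∃ j ≤ n + 1, m.gcd (p ^ (n + 1) : ℕ) = p ^ j :=
    (Nat.dvd_prime_pow hp).mp (Int.gcd_dvd_natAbs_right m (p ^ (n + 1) : ℕ))
  have pow_gcd_mem : a ^ p ^ j ∈ H := by
    rw [← zpow_natCast, ← hgcd, Int.gcd_eq_gcd_ab, zpow_add, zpow_mul, zpow_mul, zpow_natCast, ha,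
      one_zpow, mul_one]
    exact zpow_mem hm _
  have not_j_le_n : ¬ j ≤ n := fun hjn => haH <| by
    rw [← pow_mul_pow_sub p hjn, pow_mul]
    exact pow_mem pow_gcd_mem _
  obtain rfl : j = n + 1 := by omega
  obtain ⟨c, rfl⟩ : ((p ^ (n + 1) : ℕ) : ℤ) ∣ m := hgcd ▸ Int.gcd_dvd_left ..
  simp only [zpow_mul, zpow_natCast, ha, one_zpow]

end TwoGenerators

lemma apply_eq_self_of_mem_zpowers {R E : Type*} [Semiring R] [SeminormedAddCommGroup E]
    [Module R E] {f g : E ≃ₗᵢ[R] E} {v : E} (hg : g ∈ Subgroup.zpowers f) (hv : f v = v) :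
    g v = v := by
  rw [Subgroup.zpowers_eq_closure] at hg
  induction hg using Subgroup.closure_induction with
  | mem x hx => rwa [Set.mem_singleton_iff.mp hx]
  | one => rfl
  | mul x y _ _ hx hy => rw [LinearIsometryEquiv.coe_mul, Function.comp_apply, hy, hx]
  | inv x _ hx => rwa [LinearIsometryEquiv.coe_inv, LinearIsometryEquiv.symm_apply_eq, eq_comm]

lemma sq_eq_one_of_forall_apply_eq_mul_mul {R A : Type*} [Semiring R] [SeminormedRing A]
    [Module R A] {f : A ≃ₗᵢ[R] A} {q r : A} (hq : q * q = -1) (hr : r * r = -1)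
    (hf : ∀ x, f x = q * x * r) : f ^ 2 = 1 := by
  ext1 x
  calc (f ^ 2) x = q * (q * x * r) * r := by
        rw [pow_two, LinearIsometryEquiv.coe_mul, Function.comp_apply, hf, hf]
    _ = (q * q) * x * (r * r) := by simp only [mul_assoc]
    _ = x := by rw [hq, hr, neg_one_mul, neg_mul_neg, mul_one]

lemma qj_mul_qj : qj * qj = -1 := by ext <;> simp <;> simp [qj]

lemma k2_symm_apply (x : ℍ[ℝ]) : k2.symm x = -(qk * star x * qj) := by
  rw [LinearIsometryEquiv.symm_apply_eq]
  calc x = (qj * qj) * x * (qk * qk) := by simp [qj_mul_qj, qk_mul_qk]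
    _ = k2 (-(qk * star x * qj)) := by simp [star_qj, star_qk, mul_assoc]

lemma k1_mul_k2_inv_apply (x : ℍ[ℝ]) : (k1 * k2⁻¹) x = qj * x * qj := by
  calc (k1 * k2⁻¹) x = qj * x * (qk * qi) := by
        simp [k2_symm_apply, star_qj, star_qk, mul_assoc]
    _ = qj * x * qj := by rw [qk_mul_qi]

lemma k1_mul_k2_inv_sq : (k1 * k2⁻¹) ^ 2 = 1 :=
  sq_eq_one_of_forall_apply_eq_mul_mul qj_mul_qj qj_mul_qj k1_mul_k2_inv_apply

lemma k1_sq_apply_qj : (k1 ^ 2) qj = -qj := by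
  rw [k1_sq_apply, qi_mul_qj, qk_mul_qi]

lemma k1_apply_one_sub_qi : k1 (1 - qi) = 1 - qi := by
  simp [star_qi, add_mul, qi_mul_qi, sub_eq_add_neg]

lemma k2_sq_apply_one_sub_qi : (k2 ^ 2) (1 - qi) = -(1 - qi) := by
  rw [k2_sq_apply, mul_sub, mul_one, qi_mul_qi, sub_mul, qi_mul_qi]
  noncomm_ring

instance : IsAddTorsionFree ℍ[ℝ] := .of_module_rat ℍ[ℝ]

lemma one_sub_qi_ne_zero : 1 - qi ≠ 0 := fun h => by
  have re_qi : qi.re = 0 := rfl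
  simpa [re_qi] using congrArg QuaternionAlgebra.re h

lemma k2_sq_notMem_zpowers_k1 : k2 ^ 2 ∉ Subgroup.zpowers k1 := fun h =>
  one_sub_qi_ne_zero <| self_eq_neg.mp <|
    (apply_eq_self_of_mem_zpowers h k1_apply_one_sub_qi).symm.trans k2_sq_apply_one_sub_qi

lemma orderOf_k1 : orderOf k1 = 4 := by
  have k1_sq_ne_one : k1 ^ 2 ≠ 1 := fun h => by
    have hqj : qj = -qj := by simpa [h] using k1_sq_apply_qj
    simpa [self_eq_neg.mp hqj] using norm_qj
  exact orderOf_eq_prime_pow (p := 2) (n := 1) k1_sq_ne_one k1_pow_four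

lemma orderOf_k2 : orderOf k2 = 4 :=
  orderOf_eq_prime_pow (p := 2) (n := 1) (fun h => k2_sq_notMem_zpowers_k1 (h ▸ one_mem _))
    k2_pow_four

lemma disjoint_zpowers_k1_zpowers_k2 : Disjoint (Subgroup.zpowers k1) (Subgroup.zpowers k2) :=
  (disjoint_zpowers_of_pow_prime_pow_notMem (n := 1) Nat.prime_two k2_pow_four
    k2_sq_notMem_zpowers_k1).symm

/-- The group `K` generated by `k₁ : x ↦ −x̄ i` and `k₂ : x ↦ −j x̄ k` has order 16. -/
theorem stmt_6 : Nat.card K = 16 := by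
  calc Nat.card K = orderOf k1 * orderOf k2 :=
        card_closure_pair_eq_orderOf_mul_orderOf k1_mul_k2_sq k1_mul_k2_inv_sq
          disjoint_zpowers_k1_zpowers_k2
    _ = 16 := by rw [orderOf_k1, orderOf_k2]
end
end

section
/- The only 2-dimensional ℝ-subspaces of ℍ invariant under the map k₁ : x ↦ −x̄ i are V₁ = spanℝ{1, i} and V₂ = spanℝ{j, k}. Consequently, V₁ and V₂ are the only 2-dimensional subspaces of ℍ invariant under every element of the group K generated by k₁ and k₂ : x ↦ −j x̄ k. -/
open Quaternion

noncomputable section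

/-!
The square of `k₁` is `x ↦ -(i x i)`, which is `1` on `V₁` and `-1` on `V₂`. Let `L` be a
`k₁`-invariant plane. If `k₁²` does not fix `L` pointwise, then `u = k₁² x - x ≠ 0` for some
`x ∈ L`, and `k₁² u = -u`. Since `-1` is not a square in `ℝ`, `u` is not an eigenvector of `k₁`, so
`u` and `k₁ u` span `L` and `k₁² = -1` on `L`. Hence `L ≤ V₁` or `L ≤ V₂`, with equality by
dimension. Conversely, `k₁²` is centralized by `K`, so `K` preserves its eigenspaces `V₁` and `V₂`.
-/

section SpanPair

open Module

variable {𝕜 V : Type*} [DivisionRing 𝕜] [AddCommGroup V] [Module 𝕜 V]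

lemma span_pair_eq_of_finrank_eq_two {L : Submodule 𝕜 V} (hL : finrank 𝕜 L = 2) {u v : V}
    (hu : u ∈ L) (hv : v ∈ L) (huv : LinearIndependent 𝕜 ![u, v]) :
    Submodule.span 𝕜 {u, v} = L := by
  have : FiniteDimensional 𝕜 L := .of_finrank_pos (by lia)
  refine Submodule.eq_of_le_of_finrank_eq (Submodule.span_le.mpr (Set.pair_subset hu hv)) ?_
  rw [hL, ← Matrix.range_cons_cons_empty u v ![], finrank_span_eq_card huv, Fintype.card_fin]

lemma eq_span_pair_of_le_of_finrank_eq_two {L : Submodule 𝕜 V} (hL : finrank 𝕜 L = 2) {u v : V}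
    (h : L ≤ Submodule.span 𝕜 {u, v}) : L = Submodule.span 𝕜 {u, v} := by
  classical
  have : FiniteDimensional 𝕜 (Submodule.span 𝕜 {u, v}) := .span_of_finite 𝕜 (Set.toFinite _)
  refine Submodule.eq_of_le_of_finrank_le h ?_
  calc finrank 𝕜 (Submodule.span 𝕜 {u, v})
      ≤ ({u, v} : Finset V).card := by
        rw [← Finset.coe_pair]
        exact finrank_span_finset_le_card _
    _ ≤ 2 := Finset.card_le_two
    _ = finrank 𝕜 L := hL.symm

end SpanPair

section Eigenspace

open Module

variable {𝕜 V : Type*} [Field 𝕜] [AddCommGroup V] [Module 𝕜 V]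

lemma linearIndependent_pair_apply_of_mem_eigenspace_sq {f : End 𝕜 V} {b : 𝕜} (hb : ¬IsSquare b)
    {u : V} (hu : u ∈ (f ^ 2).eigenspace b) (hu₀ : u ≠ 0) : LinearIndependent 𝕜 ![u, f u] := by
  rw [LinearIndependent.pair_iff' hu₀]
  intro c hc
  have hcu : (c * c) • u = b • u := by
    rw [mul_smul, hc, ← map_smul, hc]
    simpa only [pow_two, End.mul_apply] using End.mem_eigenspace_iff.mp hu
  exact hb ⟨c, (smul_left_injective 𝕜 hu₀ hcu).symm⟩

lemma le_eigenspace_sq_or_le_eigenspace_sq_of_finrank_eq_two {f : End 𝕜 V} {a b : 𝕜}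
    (hf : (f ^ 2 - algebraMap 𝕜 (End 𝕜 V) b) * (f ^ 2 - algebraMap 𝕜 (End 𝕜 V) a) = 0)
    (hb : ¬IsSquare b) {L : Submodule 𝕜 V} (hL : finrank 𝕜 L = 2) (hfL : L ∈ f.invtSubmodule) :
    L ≤ (f ^ 2).eigenspace a ∨ L ≤ (f ^ 2).eigenspace b := by
  refine or_iff_not_imp_left.mpr fun hLa ↦ ?_
  obtain ⟨x, hxL, hxa⟩ := SetLike.not_le_iff_exists.mp hLa
  set u := (f ^ 2) x - a • x
  have hu₀ : u ≠ 0 := fun hu ↦ hxa (End.mem_eigenspace_iff.mpr (sub_eq_zero.mp hu))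
  have hu : u ∈ (f ^ 2).eigenspace b :=
    End.mem_eigenspace_iff.mpr (sub_eq_zero.mp (LinearMap.congr_fun hf x))
  have hfu : f u ∈ (f ^ 2).eigenspace b :=
    End.mapsTo_genEigenspace_of_comm (Commute.pow_self f 2) b 1 hu
  have huL : u ∈ L := by
    have hf2x : (f ^ 2) x ∈ L := by
      rw [pow_two]
      exact hfL (hfL hxL)
    exact L.sub_mem hf2x (L.smul_mem a hxL)
  rw [← span_pair_eq_of_finrank_eq_two hL huL (hfL huL)
    (linearIndependent_pair_apply_of_mem_eigenspace_sq hb hu hu₀)]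
  exact Submodule.span_le.mpr (Set.pair_subset hu hfu)

lemma map_eigenspace_eq_of_commute {R M : Type*} [CommRing R] [AddCommGroup M] [Module R M]
    {f : End R M} {e : M ≃ₗ[R] M} (h : Commute (e : End R M) f) (c : R) :
    (f.eigenspace c).map (e : End R M) = f.eigenspace c := by
  ext x
  have hfe : e (f (e.symm x)) = f x := by
    simpa using LinearMap.congr_fun h (e.symm x)
  rw [Submodule.mem_map_equiv, End.mem_eigenspace_iff, End.mem_eigenspace_iff, ← e.injective.eq_iff,
    hfe, map_smul, e.apply_symm_apply]

end Eigenspace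

@[simp] lemma re_qi : qi.re = 0 := rfl
@[simp] lemma imI_qi : qi.imI = 1 := rfl
@[simp] lemma imJ_qi : qi.imJ = 0 := rfl
@[simp] lemma imK_qi : qi.imK = 0 := rfl
@[simp] lemma re_qj : qj.re = 0 := rfl
@[simp] lemma imI_qj : qj.imI = 0 := rfl
@[simp] lemma imJ_qj : qj.imJ = 1 := rfl
@[simp] lemma imK_qj : qj.imK = 0 := rfl
@[simp] lemma re_qk : qk.re = 0 := rfl
@[simp] lemma imI_qk : qk.imI = 0 := rfl
@[simp] lemma imJ_qk : qk.imJ = 0 := rfl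
@[simp] lemma imK_qk : qk.imK = 1 := rfl

lemma commute_k1_sq_of_mem_K {g : ℍ[ℝ] ≃ₗᵢ[ℝ] ℍ[ℝ]} (hg : g ∈ K) : Commute g (k1 ^ 2) := by
  have hK : K ≤ Subgroup.centralizer {k1 ^ 2} := by
    refine (Subgroup.closure_le _).mpr (Set.pair_subset ?_ ?_)
    · exact Subgroup.mem_centralizer_singleton_iff.mpr (Commute.self_pow k1 2)
    · exact Subgroup.mem_centralizer_singleton_iff.mpr commute_k1_sq_k2.symm
  exact Subgroup.mem_centralizer_singleton_iff.mp (hK hg)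

/-- The isometry `k₁` as an element of the endomorphism algebra of `ℍ`, where it has polynomials
and eigenspaces. -/
abbrev k1End : Module.End ℝ ℍ[ℝ] := k1.toLinearEquiv

lemma k1End_sq_apply (x : ℍ[ℝ]) : (k1End ^ 2) x = -(qi * x * qi) := by
  have star_qi : star qi = -qi := by ext <;> simp
  simp [pow_two, star_qi]

lemma k1End_sq_add_one_mul_k1End_sq_sub_one : (k1End ^ 2 + 1) * (k1End ^ 2 - 1) = 0 := by
  ext x <;> simp [k1End_sq_apply]

lemma mem_eigenspace_k1End_sq_one_iff {x : ℍ[ℝ]} :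
    x ∈ (k1End ^ 2).eigenspace 1 ↔ x.imJ = 0 ∧ x.imK = 0 := by
  simp [k1End_sq_apply, Quaternion.ext_iff, neg_eq_self]

lemma mem_eigenspace_k1End_sq_neg_one_iff {x : ℍ[ℝ]} :
    x ∈ (k1End ^ 2).eigenspace (-1) ↔ x.re = 0 ∧ x.imI = 0 := by
  simp [k1End_sq_apply, Quaternion.ext_iff, neg_eq_self]

lemma eigenspace_k1End_sq_one : (k1End ^ 2).eigenspace 1 = Submodule.span ℝ {1, qi} := by
  ext x
  rw [mem_eigenspace_k1End_sq_one_iff, Submodule.mem_span_pair]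
  constructor
  · rintro ⟨hJ, hK⟩
    refine ⟨x.re, x.imI, ?_⟩
    ext <;> simp [hJ, hK]
  · rintro ⟨a, b, rfl⟩
    simp

lemma eigenspace_k1End_sq_neg_one : (k1End ^ 2).eigenspace (-1) = Submodule.span ℝ {qj, qk} := by
  ext x
  rw [mem_eigenspace_k1End_sq_neg_one_iff, Submodule.mem_span_pair]
  constructor
  · rintro ⟨hre, hI⟩
    refine ⟨x.imJ, x.imK, ?_⟩
    ext <;> simp [hre, hI]
  · rintro ⟨a, b, rfl⟩
    simp

lemma map_eigenspace_k1End_sq_of_mem_K {g : ℍ[ℝ] ≃ₗᵢ[ℝ] ℍ[ℝ]} (hg : g ∈ K) (c : ℝ) :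
    ((k1End ^ 2).eigenspace c).map (g.toLinearEquiv : ℍ[ℝ] →ₗ[ℝ] ℍ[ℝ]) =
      (k1End ^ 2).eigenspace c :=
  map_eigenspace_eq_of_commute
    (LinearMap.ext fun x ↦ DFunLike.congr_fun (commute_k1_sq_of_mem_K hg) x) c

lemma eq_span_one_qi_or_eq_span_qj_qk_of_map_k1_eq {L : Submodule ℝ ℍ[ℝ]}
    (hL : Module.finrank ℝ L = 2) (h : L.map (k1.toLinearEquiv : ℍ[ℝ] →ₗ[ℝ] ℍ[ℝ]) = L) :
    L = Submodule.span ℝ {1, qi} ∨ L = Submodule.span ℝ {qj, qk} := by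
  have hL' : L ≤ (k1End ^ 2).eigenspace 1 ∨ L ≤ (k1End ^ 2).eigenspace (-1) :=
    le_eigenspace_sq_or_le_eigenspace_sq_of_finrank_eq_two
      (by simpa using k1End_sq_add_one_mul_k1End_sq_sub_one)
      (fun hsq ↦ by linarith [hsq.nonneg]) hL
      ((Module.End.mem_invtSubmodule_iff_map_le _).mpr h.le)
  rw [eigenspace_k1End_sq_one, eigenspace_k1End_sq_neg_one] at hL'
  exact hL'.imp (eq_span_pair_of_le_of_finrank_eq_two hL)
    (eq_span_pair_of_le_of_finrank_eq_two hL)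

lemma map_eq_of_mem_K {L : Submodule ℝ ℍ[ℝ]}
    (hL : L = Submodule.span ℝ {1, qi} ∨ L = Submodule.span ℝ {qj, qk})
    {g : ℍ[ℝ] ≃ₗᵢ[ℝ] ℍ[ℝ]} (hg : g ∈ K) :
    L.map (g.toLinearEquiv : ℍ[ℝ] →ₗ[ℝ] ℍ[ℝ]) = L := by
  rw [← eigenspace_k1End_sq_one, ← eigenspace_k1End_sq_neg_one] at hL
  rcases hL with rfl | rfl <;> exact map_eigenspace_k1End_sq_of_mem_K hg _

/-- The only 2-dimensional ℝ-subspaces of `ℍ` invariant under `k₁` are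
`V₁ = span {1, i}` and `V₂ = span {j, k}`; consequently these are also the only
2-dimensional subspaces invariant under every element of `K`. -/
theorem stmt_10 :
    (∀ L : Submodule ℝ ℍ[ℝ], Module.finrank ℝ L = 2 →
      (L.map (k1.toLinearEquiv : ℍ[ℝ] →ₗ[ℝ] ℍ[ℝ]) = L ↔
        L = Submodule.span ℝ {1, qi} ∨ L = Submodule.span ℝ {qj, qk})) ∧
    (∀ L : Submodule ℝ ℍ[ℝ], Module.finrank ℝ L = 2 →
      ((∀ g ∈ K, L.map (LinearIsometryEquiv.toLinearEquiv g : ℍ[ℝ] →ₗ[ℝ] ℍ[ℝ]) = L) ↔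
        L = Submodule.span ℝ {1, qi} ∨ L = Submodule.span ℝ {qj, qk})) := by
  constructor <;> intro L hL
  · exact ⟨eq_span_one_qi_or_eq_span_qj_qk_of_map_k1_eq hL, fun h ↦ map_eq_of_mem_K h k1_mem_K⟩
  · exact ⟨fun h ↦ eq_span_one_qi_or_eq_span_qj_qk_of_map_k1_eq hL (h k1 k1_mem_K),
      fun h _ hg ↦ map_eq_of_mem_K h hg⟩
end
end

section
/- Let n be a positive integer and let G be a finite subgroup of the orthogonal group O(n) acting on ℝⁿ. Then the following are equivalent: (1) there exists w ∈ O(n) with determinant −1 commuting with every element of G (i.e., the centralizer of G in O(n) is not contained in SO(n)); (2) there exists a G-invariant ℝ-subspace of ℝⁿ of odd dimension (a subspace V with g(V) = V for all g ∈ G and dim V odd). -/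
/-!
An isometry `w` of a finite-dimensional real inner product space fixes a subspace pointwise and
moves only its orthogonal complement, the moved subspace. Cartan–Dieudonné writes `w` as a product
of as many hyperplane reflections as the dimension of the moved subspace, and no shorter product
can work, so `det w` is `-1` to the power of that dimension. If `w` has determinant `-1` and
commutes with a family of isometries, then its moved subspace is therefore an invariant subspace
of odd dimension. Conversely, an invariant subspace `V` of odd dimension is the moved subspace of
the reflection in `Vᗮ`, which commutes with every isometry that preserves `V`.
-/

open Module

section MovedSubspace

variable {𝕜 E : Type*} [RCLike 𝕜] [NormedAddCommGroup E] [InnerProductSpace 𝕜 E]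

/-- The moved subspace of a linear isometry: the orthogonal complement of its fixed vectors. In
finite dimension it is also the range of `φ - 1`. -/
def movedSubspace (φ : E ≃ₗᵢ[𝕜] E) : Submodule 𝕜 E :=
  φ.toLinearMap.fixedSubmoduleᗮ

theorem map_movedSubspace_of_commute {φ ψ : E ≃ₗᵢ[𝕜] E} (h : Commute φ ψ) :
    (movedSubspace φ).map ψ.toLinearMap = movedSubspace φ := by
  have hcomm (x : E) : φ (ψ x) = ψ (φ x) := DFunLike.congr_fun h.eq x
  have hfix : φ.toLinearMap.fixedSubmodule.map ψ.toLinearMap = φ.toLinearMap.fixedSubmodule := by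
    ext x
    rw [Submodule.mem_map_equiv, LinearMap.mem_fixedSubmodule_iff,
      LinearMap.mem_fixedSubmodule_iff, ← ψ.injective.eq_iff]
    simp [← hcomm]
  rw [movedSubspace, Submodule.map_orthogonal_equiv, hfix]

theorem commute_reflection_of_map_eq {K : Submodule 𝕜 E} [K.HasOrthogonalProjection]
    {φ : E ≃ₗᵢ[𝕜] E} (h : K.map φ.toLinearMap = K) : Commute K.reflection φ := by
  ext x
  calc K.reflection (φ x)
      = (K.map φ.toLinearMap).reflection (φ x) := by simp only [h]
    _ = φ (K.reflection x) := by
        rw [Submodule.reflection_map_apply φ K (φ x), φ.symm_apply_apply]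

variable [FiniteDimensional 𝕜 E]

theorem movedSubspace_one : movedSubspace (1 : E ≃ₗᵢ[𝕜] E) = ⊥ := by
  rw [movedSubspace, Submodule.orthogonal_eq_bot_iff, LinearMap.fixedSubmodule_eq_top_iff]
  rfl

theorem movedSubspace_reflection_orthogonal (K : Submodule 𝕜 E) :
    movedSubspace Kᗮ.reflection = K := by
  have hfix : Kᗮ.reflection.toLinearMap.fixedSubmodule = Kᗮ := by
    ext x
    exact LinearMap.mem_fixedSubmodule_iff.trans (Submodule.reflection_eq_self_iff x)
  rw [movedSubspace, hfix, Submodule.orthogonal_orthogonal]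

theorem movedSubspace_mul_le (φ ψ : E ≃ₗᵢ[𝕜] E) :
    movedSubspace (φ * ψ) ≤ movedSubspace φ ⊔ movedSubspace ψ := by
  rw [← Submodule.orthogonal_le_orthogonal_iff, ← Submodule.inf_orthogonal]
  simp only [movedSubspace, Submodule.orthogonal_orthogonal]
  exact LinearMap.fixedSubmodule_inf_fixedSubmodule_le_comp _ _

theorem finrank_movedSubspace_prod_reflection_orthogonal_le (L : List (Submodule 𝕜 E)) :
    finrank 𝕜 (movedSubspace (L.map fun K : Submodule 𝕜 E ↦ Kᗮ.reflection).prod) ≤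
      (L.map fun K : Submodule 𝕜 E ↦ finrank 𝕜 K).sum := by
  induction L with
  | nil => simp [movedSubspace_one]
  | cons K L ih =>
    set φ := (L.map fun K : Submodule 𝕜 E ↦ Kᗮ.reflection).prod
    rw [List.map_cons, List.map_cons, List.prod_cons, List.sum_cons]
    calc finrank 𝕜 (movedSubspace (Kᗮ.reflection * φ))
        ≤ finrank 𝕜 ↥(movedSubspace Kᗮ.reflection ⊔ movedSubspace φ) :=
          Submodule.finrank_mono (movedSubspace_mul_le _ _)
      _ ≤ finrank 𝕜 K + finrank 𝕜 (movedSubspace φ) := by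
          rw [movedSubspace_reflection_orthogonal]
          exact Submodule.finrank_add_le_finrank_add_finrank _ _
      _ ≤ finrank 𝕜 K + (L.map fun K : Submodule 𝕜 E ↦ finrank 𝕜 K).sum := by gcongr

theorem det_prod_reflection_orthogonal (L : List (Submodule 𝕜 E)) :
    LinearMap.det (L.map fun K : Submodule 𝕜 E ↦ Kᗮ.reflection).prod.toLinearMap =
      (-1) ^ (L.map fun K : Submodule 𝕜 E ↦ finrank 𝕜 K).sum := by
  induction L with
  | nil =>
    rw [List.map_nil, List.map_nil, List.prod_nil, List.sum_nil, pow_zero]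
    exact LinearMap.det_id
  | cons K L ih =>
    have hdet : LinearMap.det Kᗮ.reflection.toLinearMap = (-1) ^ finrank 𝕜 K := by
      rw [Submodule.det_reflection, Submodule.orthogonal_orthogonal]
    rw [List.map_cons, List.map_cons, List.prod_cons, List.sum_cons, pow_add, ← ih, ← hdet]
    exact LinearMap.det_comp _ _

end MovedSubspace

section Real

variable {E : Type*} [NormedAddCommGroup E] [InnerProductSpace ℝ E] [FiniteDimensional ℝ E]

theorem exists_eq_prod_reflection_orthogonal_sum_finrank_le (φ : E ≃ₗᵢ[ℝ] E) :
    ∃ L : List (Submodule ℝ E), φ = (L.map fun K : Submodule ℝ E ↦ Kᗮ.reflection).prod ∧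
      (L.map fun K : Submodule ℝ E ↦ finrank ℝ K).sum ≤ finrank ℝ (movedSubspace φ) := by
  have hmoved : (ContinuousLinearMap.id ℝ E - φ).kerᗮ = movedSubspace φ := by
    congr 1
    ext x
    exact sub_eq_zero.trans eq_comm
  obtain ⟨l, hlen, hl⟩ := φ.reflections_generate_dim_aux (by rw [hmoved])
  refine ⟨l.map fun v ↦ Submodule.span ℝ {v}, by rw [hl, List.map_map]; rfl, ?_⟩
  have hline (v : E) : finrank ℝ (Submodule.span ℝ {v}) ≤ 1 := by
    simpa using finrank_span_le_card (R := ℝ) ({v} : Set E)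
  calc _ ≤ (l.map fun _ ↦ 1).sum := by
        rw [List.map_map]
        exact List.sum_le_sum fun v _ ↦ hline v
    _ = l.length := by simp
    _ ≤ finrank ℝ (movedSubspace φ) := hlen

theorem det_eq_neg_one_pow_finrank_movedSubspace (φ : E ≃ₗᵢ[ℝ] E) :
    LinearMap.det φ.toLinearMap = (-1) ^ finrank ℝ (movedSubspace φ) := by
  obtain ⟨L, rfl, hle⟩ := exists_eq_prod_reflection_orthogonal_sum_finrank_le φ
  rw [(finrank_movedSubspace_prod_reflection_orthogonal_le L).antisymm hle,
    det_prod_reflection_orthogonal]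

theorem exists_det_eq_neg_one_commute_iff_exists_odd_finrank_map_eq (S : Set (E ≃ₗᵢ[ℝ] E)) :
    (∃ w : E ≃ₗᵢ[ℝ] E, LinearMap.det w.toLinearMap = -1 ∧ ∀ g ∈ S, Commute w g) ↔
      ∃ V : Submodule ℝ E, Odd (finrank ℝ V) ∧ ∀ g ∈ S, V.map g.toLinearMap = V := by
  constructor
  · rintro ⟨w, hdet, hcomm⟩
    rw [det_eq_neg_one_pow_finrank_movedSubspace,
      neg_one_pow_eq_neg_one_iff_odd (by norm_num)] at hdet
    exact ⟨movedSubspace w, hdet, fun g hg ↦ map_movedSubspace_of_commute (hcomm g hg)⟩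
  · rintro ⟨V, hodd, hmap⟩
    refine ⟨Vᗮ.reflection, ?_, fun g hg ↦ commute_reflection_of_map_eq ?_⟩
    · rw [det_eq_neg_one_pow_finrank_movedSubspace, movedSubspace_reflection_orthogonal,
        hodd.neg_one_pow]
    · rw [Submodule.map_orthogonal_equiv, hmap g hg]

end Real

section Matrix

variable {ι 𝕜 : Type*} [Fintype ι] [DecidableEq ι] [RCLike 𝕜]

/-- The unitary group of matrices (over `ℝ`, the orthogonal group) as the group of linear
isometries of Euclidean space, a matrix `A` acting by `x ↦ A *ᵥ x`. -/
noncomputable def unitaryGroupEquiv :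
    Matrix.unitaryGroup ι 𝕜 ≃* (EuclideanSpace 𝕜 ι ≃ₗᵢ[𝕜] EuclideanSpace 𝕜 ι) :=
  (Unitary.mapEquiv { Matrix.toEuclideanCLM (n := ι) (𝕜 := 𝕜) with }).toMulEquiv.trans
    Unitary.linearIsometryEquiv

theorem unitaryGroupEquiv_toLinearMap (g : Matrix.unitaryGroup ι 𝕜) :
    (unitaryGroupEquiv g).toLinearMap = Matrix.toEuclideanLin (g : Matrix ι ι 𝕜) :=
  rfl

theorem det_unitaryGroupEquiv (g : Matrix.unitaryGroup ι 𝕜) :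
    LinearMap.det (unitaryGroupEquiv g).toLinearMap = (g : Matrix ι ι 𝕜).det := by
  rw [unitaryGroupEquiv_toLinearMap, LinearMap.det_toLpLin]

theorem map_unitaryGroupEquiv_map_toLp_eq_iff (g : Matrix.unitaryGroup ι 𝕜)
    (V : Submodule 𝕜 (ι → 𝕜)) :
    (V.map (WithLp.linearEquiv 2 𝕜 (ι → 𝕜)).symm.toLinearMap).map
          (unitaryGroupEquiv g).toLinearMap =
        V.map (WithLp.linearEquiv 2 𝕜 (ι → 𝕜)).symm.toLinearMap ↔
      V.map (g : Matrix ι ι 𝕜).mulVecLin = V := by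
  have hinj := Submodule.map_injective_of_injective (WithLp.linearEquiv 2 𝕜 (ι → 𝕜)).symm.injective
  rw [← hinj.eq_iff, ← Submodule.map_comp, ← Submodule.map_comp, unitaryGroupEquiv_toLinearMap]
  rfl

theorem stmt_13_general (S : Set (Matrix.orthogonalGroup ι ℝ)) :
    (∃ w : Matrix.orthogonalGroup ι ℝ, (w : Matrix ι ι ℝ).det = -1 ∧ ∀ g ∈ S, w * g = g * w) ↔
      ∃ V : Submodule ℝ (ι → ℝ), Odd (finrank ℝ V) ∧
        ∀ g ∈ S, V.map (g : Matrix ι ι ℝ).mulVecLin = V := by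
  have hsurj := Submodule.map_surjective_of_surjective
    (WithLp.linearEquiv 2 ℝ (ι → ℝ)).symm.surjective
  have hiso :=
    exists_det_eq_neg_one_commute_iff_exists_odd_finrank_map_eq (unitaryGroupEquiv '' S)
  simp only [unitaryGroupEquiv.surjective.exists, hsurj.exists, Set.forall_mem_image,
    det_unitaryGroupEquiv, commute_map_iff unitaryGroupEquiv.injective,
    LinearEquiv.finrank_map_eq, map_unitaryGroupEquiv_map_toLp_eq_iff] at hiso
  exact hiso

end Matrix

/-- For a finite subgroup `G` of `O(n)`, the following are equivalent: (1) there is a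
`w ∈ O(n)` with `det w = −1` commuting with every element of `G`; (2) there is a
`G`-invariant subspace of `ℝⁿ` of odd dimension. -/
theorem stmt_13 (n : ℕ) (hn : 0 < n) (G : Subgroup (Matrix.orthogonalGroup (Fin n) ℝ))
    [Finite G] :
    (∃ w : Matrix.orthogonalGroup (Fin n) ℝ, (w : Matrix (Fin n) (Fin n) ℝ).det = -1 ∧
        ∀ g ∈ G, w * g = g * w) ↔
      (∃ V : Submodule ℝ (Fin n → ℝ), Odd (Module.finrank ℝ V) ∧
        ∀ g ∈ G, V.map (Matrix.mulVecLin (g : Matrix (Fin n) (Fin n) ℝ)) = V) :=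
  stmt_13_general (G : Set (Matrix.orthogonalGroup (Fin n) ℝ))
end

section
/- Let n be a positive integer and let g be a finite-order element of the orthogonal group O(n) acting on ℝⁿ. Then there exists w ∈ O(n) with determinant −1 commuting with g if and only if g has an invariant 1-dimensional ℝ-subspace of ℝⁿ (equivalently, a real eigenvector). -/
/-!
If `w` commutes with `g` and `det w < 0`, the characteristic polynomial of `-w` is negative at `0`.
A monic real polynomial all of whose real roots have even multiplicity is nonnegative, so `-w` has a
generalized eigenspace of odd dimension. It is stable under `g`, and an endomorphism of an
odd-dimensional real space has an eigenvector. Conversely, if `g` is an isometry that preserves a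
line, the reflection in the orthogonal complement of that line commutes with `g`.
-/

open Module Polynomial

section RealPolynomial

variable {p : ℝ[X]}

lemma eval_pos_of_monic_of_forall_not_isRoot (hp : p.Monic) (hroot : ∀ r, ¬ p.IsRoot r) (x : ℝ) :
    0 < p.eval x := by
  by_contra! hx
  have hdeg : 0 < p.degree := by
    by_contra! hdeg
    rw [hp.degree_le_zero_iff_eq_one.mp hdeg, eval_one] at hx
    exact hx.not_gt one_pos
  have htop := p.tendsto_atTop_of_leadingCoeff_nonneg hdeg (by simp [hp.leadingCoeff])
  obtain ⟨y, hy, hxy⟩ :=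
    ((htop.eventually_ge_atTop 0).and (Filter.eventually_ge_atTop x)).exists
  obtain ⟨r, -, hr⟩ := intermediate_value_Icc hxy p.continuousOn ⟨hx, hy⟩
  exact hroot r hr

lemma exists_isRoot_of_odd_natDegree (hp : Odd p.natDegree) : ∃ r, p.IsRoot r := by
  have hp0 : p ≠ 0 := by
    rintro rfl
    simp at hp
  wlog hmonic : p.Monic generalizing p
  · simpa [hp0] using this (p := p * C p.leadingCoeff⁻¹)
      (by rwa [natDegree_mul_leadingCoeff_inv p hp0]) (by simpa using hp0)
      (monic_mul_leadingCoeff_inv hp0)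
  by_contra! hroot
  have hpos := eval_pos_of_monic_of_forall_not_isRoot hmonic hroot 0
  have hneg := eval_pos_of_monic_of_forall_not_isRoot hmonic.neg_one_pow_natDegree_mul_comp_neg_X
    (fun r ↦ by simpa [hp.neg_one_pow] using hroot (-r)) 0
  simp only [hp.neg_one_pow, neg_mul, one_mul, eval_neg, eval_comp, eval_X, neg_zero] at hneg
  linarith

lemma exists_odd_rootMultiplicity_of_monic_of_eval_neg (hp : p.Monic) {x : ℝ}
    (hx : p.eval x < 0) : ∃ r, Odd (p.rootMultiplicity r) := by
  classical
  by_contra! heven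
  simp only [Nat.not_odd_iff_even] at heven
  obtain ⟨q, hpq, -, hq⟩ := p.exists_prod_multiset_X_sub_C_mul
  have hq_monic : q.Monic :=
    (monic_multisetProd_X_sub_C p.roots).of_mul_monic_left (by rwa [hpq])
  have hq_root (r : ℝ) : ¬ q.IsRoot r := by
    rw [← mem_roots hq_monic.ne_zero, hq]
    exact Multiset.notMem_zero r
  refine hx.not_ge ?_
  rw [← hpq, prod_multiset_root_eq_finset_root, eval_mul, eval_prod]
  exact mul_nonneg (Finset.prod_nonneg fun r _ ↦ by simpa using (heven r).pow_nonneg _)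
    (eval_pos_of_monic_of_forall_not_isRoot hq_monic hq_root x).le

end RealPolynomial

lemma hasEigenvalue_of_restrict {R M : Type*} [CommRing R] [AddCommGroup M] [Module R M]
    {f : End R M} {N : Submodule R M} {hN : ∀ x ∈ N, f x ∈ N} {μ : R}
    (h : End.HasEigenvalue (f.restrict hN) μ) : f.HasEigenvalue μ := by
  obtain ⟨v, hv⟩ := h.exists_hasEigenvector
  refine End.hasEigenvalue_of_hasEigenvector (x := (v : M)) ⟨?_, by simpa using hv.2⟩
  exact End.mem_eigenspace_iff.mpr (congrArg Subtype.val hv.apply_eq_smul)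

section RealEndomorphism

variable {V : Type*} [AddCommGroup V] [Module ℝ V] [FiniteDimensional ℝ V]

lemma exists_hasEigenvalue_of_odd_finrank (hV : Odd (finrank ℝ V)) (f : End ℝ V) :
    ∃ μ, f.HasEigenvalue μ := by
  rw [← LinearMap.charpoly_natDegree f] at hV
  exact (exists_isRoot_of_odd_natDegree hV).imp fun μ ↦ (f.hasEigenvalue_iff_isRoot_charpoly μ).mpr

lemma exists_odd_finrank_maxGenEigenspace_of_eval_charpoly_neg {f : End ℝ V} {x : ℝ}
    (hf : f.charpoly.eval x < 0) : ∃ μ, Odd (finrank ℝ (f.maxGenEigenspace μ)) := by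
  simpa only [LinearMap.finrank_maxGenEigenspace_eq] using
    exists_odd_rootMultiplicity_of_monic_of_eval_neg f.charpoly_monic hf

theorem exists_hasEigenvalue_of_commute_of_det_neg {f g : End ℝ V} (hfg : Commute f g)
    (hf : LinearMap.det f < 0) : ∃ μ, g.HasEigenvalue μ := by
  have hcharpoly : (-f).charpoly.eval 0 < 0 := by simpa [LinearMap.eval_charpoly] using hf
  obtain ⟨μ, hμ⟩ := exists_odd_finrank_maxGenEigenspace_of_eval_charpoly_neg hcharpoly
  obtain ⟨c, hc⟩ := exists_hasEigenvalue_of_odd_finrank hμ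
    (g.restrict (End.mapsTo_maxGenEigenspace_of_comm hfg.neg_left μ))
  exact ⟨c, hasEigenvalue_of_restrict hc⟩

end RealEndomorphism

section InvariantLine

variable {K V W : Type*} [Field K] [AddCommGroup V] [Module K V] [AddCommGroup W] [Module K W]

/-- The endomorphism `f` maps some one-dimensional subspace onto itself. In particular an
eigenvector with eigenvalue `0` does not span an invariant line. -/
def HasInvariantLine (f : End K V) : Prop :=
  ∃ L : Submodule K V, finrank K L = 1 ∧ L.map f = L

lemma hasInvariantLine_of_hasEigenvalue_of_injective {f : End K V} {μ : K} (hμ : f.HasEigenvalue μ)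
    (hf : Function.Injective f) : HasInvariantLine f := by
  obtain ⟨v, hv⟩ := hμ.exists_hasEigenvector
  have hμ0 : μ ≠ 0 := by
    rintro rfl
    exact hv.2 (hf (by simpa using hv.apply_eq_smul))
  refine ⟨K ∙ v, finrank_span_singleton hv.2, ?_⟩
  rw [Submodule.map_span, Set.image_singleton, hv.apply_eq_smul,
    Submodule.span_singleton_smul_eq hμ0.isUnit]

lemma HasInvariantLine.conj {f : End K V} (hf : HasInvariantLine f) (e : V ≃ₗ[K] W) :
    HasInvariantLine (e.conj f) := by
  obtain ⟨L, hL, hfL⟩ := hf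
  refine ⟨L.map (e : V →ₗ[K] W), by rw [LinearEquiv.finrank_map_eq, hL], ?_⟩
  have hcomp : e.conj f ∘ₗ e = (e : V →ₗ[K] W) ∘ₗ f := by
    ext x
    simp [LinearEquiv.conj_apply]
  rw [← Submodule.map_comp, hcomp, Submodule.map_comp, hfL]

lemma hasInvariantLine_conj_iff (e : V ≃ₗ[K] W) {f : End K V} :
    HasInvariantLine (e.conj f) ↔ HasInvariantLine f :=
  ⟨fun h ↦ by simpa using h.conj e.symm, fun h ↦ h.conj e⟩

end InvariantLine

section Isometry

lemma commute_reflection_of_map_eq_s14 {𝕜 E : Type*} [RCLike 𝕜] [NormedAddCommGroup E]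
    [InnerProductSpace 𝕜 E] {g : E ≃ₗᵢ[𝕜] E} {K : Submodule 𝕜 E} [K.HasOrthogonalProjection]
    (hK : K.map (g.toLinearEquiv : E →ₗ[𝕜] E) = K) : Commute K.reflection g := by
  ext x
  simpa [hK] using K.reflection_map_apply g (g x)

theorem exists_det_eq_neg_one_commute_iff_hasInvariantLine {E : Type*} [NormedAddCommGroup E]
    [InnerProductSpace ℝ E] [FiniteDimensional ℝ E] (g : E ≃ₗᵢ[ℝ] E) :
    (∃ w : E ≃ₗᵢ[ℝ] E, LinearMap.det (w.toLinearEquiv : E →ₗ[ℝ] E) = -1 ∧ Commute w g) ↔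
      HasInvariantLine (g.toLinearEquiv : E →ₗ[ℝ] E) := by
  constructor
  · rintro ⟨w, hdet, hwg⟩
    have hcomm : Commute (w.toLinearEquiv : End ℝ E) (g.toLinearEquiv : End ℝ E) :=
      LinearMap.ext fun x ↦ DFunLike.congr_fun hwg.eq x
    obtain ⟨μ, hμ⟩ := exists_hasEigenvalue_of_commute_of_det_neg hcomm (by rw [hdet]; norm_num)
    exact hasInvariantLine_of_hasEigenvalue_of_injective hμ g.injective
  · rintro ⟨L, hL, hgL⟩
    refine ⟨Lᗮ.reflection, ?_, commute_reflection_of_map_eq_s14 ?_⟩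
    · rw [Submodule.det_reflection, Submodule.orthogonal_orthogonal, hL, pow_one]
    · rw [Submodule.map_orthogonal_equiv, hgL]

end Isometry

section OrthogonalGroup

variable {ι : Type*} [Fintype ι] [DecidableEq ι]

/-- The identification of orthogonal matrices with linear isometric automorphisms of Euclidean
space. The trivial star of `ℝ` used by `Matrix.orthogonalGroup` is unified with the one coming from
`RCLike ℝ`, so that orthogonal matrices are unitary elements. -/
noncomputable def orthogonalGroupEquivLinearIsometryEquiv :
    Matrix.orthogonalGroup ι ℝ ≃* (EuclideanSpace ℝ ι ≃ₗᵢ[ℝ] EuclideanSpace ℝ ι) :=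
  (Unitary.mapEquiv (.ofClass (Matrix.toEuclideanCLM (n := ι) (𝕜 := ℝ)))).toMulEquiv.trans
    Unitary.linearIsometryEquiv

lemma coe_orthogonalGroupEquivLinearIsometryEquiv (g : Matrix.orthogonalGroup ι ℝ) :
    ((orthogonalGroupEquivLinearIsometryEquiv g).toLinearEquiv : End ℝ (EuclideanSpace ℝ ι)) =
      (WithLp.linearEquiv 2 ℝ (ι → ℝ)).symm.conj (Matrix.mulVecLin (g : Matrix ι ι ℝ)) :=
  rfl

lemma det_orthogonalGroupEquivLinearIsometryEquiv (g : Matrix.orthogonalGroup ι ℝ) :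
    LinearMap.det ((orthogonalGroupEquivLinearIsometryEquiv g).toLinearEquiv :
      End ℝ (EuclideanSpace ℝ ι)) = (g : Matrix ι ι ℝ).det := by
  rw [coe_orthogonalGroupEquivLinearIsometryEquiv, LinearEquiv.conj_apply, LinearMap.comp_assoc,
    LinearMap.det_conj, ← Matrix.toLin'_apply', LinearMap.det_toLin']

theorem stmt_14_general (g : Matrix.orthogonalGroup ι ℝ) :
    (∃ w : Matrix.orthogonalGroup ι ℝ, (w : Matrix ι ι ℝ).det = -1 ∧ w * g = g * w) ↔
      HasInvariantLine (Matrix.mulVecLin (g : Matrix ι ι ℝ)) := by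
  rw [← hasInvariantLine_conj_iff (WithLp.linearEquiv 2 ℝ (ι → ℝ)).symm,
    ← coe_orthogonalGroupEquivLinearIsometryEquiv,
    ← exists_det_eq_neg_one_commute_iff_hasInvariantLine,
    orthogonalGroupEquivLinearIsometryEquiv.surjective.exists]
  simp only [det_orthogonalGroupEquivLinearIsometryEquiv, commute_iff_eq, ← map_mul,
    EmbeddingLike.apply_eq_iff_eq]

end OrthogonalGroup

/-- For a finite-order element `g` of `O(n)`, there exists `w ∈ O(n)` with `det w = −1`
commuting with `g` if and only if `g` has an invariant 1-dimensional subspace of `ℝⁿ`. -/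
theorem stmt_14 (n : ℕ) (hn : 0 < n) (g : Matrix.orthogonalGroup (Fin n) ℝ)
    (hg : IsOfFinOrder g) :
    (∃ w : Matrix.orthogonalGroup (Fin n) ℝ, (w : Matrix (Fin n) (Fin n) ℝ).det = -1 ∧
        w * g = g * w) ↔
      (∃ L : Submodule ℝ (Fin n → ℝ), Module.finrank ℝ L = 1 ∧
        L.map (Matrix.mulVecLin (g : Matrix (Fin n) (Fin n) ℝ)) = L) :=
  stmt_14_general g
end

section
/- Let m, n ≥ 1 be integers and let s be an integer with −m ≤ 2s ≤ n − m. Define unit quaternions z₁ = exp(−(2π/m)·i), z₂ = exp(−((m+2s)π/(mn))·i), w₂ = exp((π/n)·i), and let g₁, g₂ be the ℝ-linear isometries of ℍ given by g₁(x) = z̄₁ x and g₂(x) = z̄₂ x w₂. Then the subgroup G of the group of ℝ-linear isometric automorphisms of ℍ generated by g₁ and g₂ satisfies: either there is a 1-dimensional ℝ-subspace of ℍ invariant under every element of G, or some element of G has no invariant 1-dimensional ℝ-subspace. -/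
open Quaternion

noncomputable section

/-- The unit quaternion `exp(θ·i) = cos θ + (sin θ)·i`. -/
def expi (θ : ℝ) : ℍ[ℝ] := ⟨Real.cos θ, Real.sin θ, 0, 0⟩

lemma norm_expi (θ : ℝ) : ‖expi θ‖ = 1 := by
  have h : normSq (expi θ) = 1 := by
    rw [Quaternion.normSq_def']
    simp [expi, Real.cos_sq_add_sin_sq θ]
  have h2 := Quaternion.normSq_eq_norm_mul_self (expi θ)
  nlinarith [norm_nonneg (expi θ)]

/-- The rotation `[z,w] : x ↦ z̄ x w` of `ℍ` by unit quaternions `z, w`, as a linear isometry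
equivalence. -/
def rotIso (z w : ℍ[ℝ]) (hz : ‖z‖ = 1) (hw : ‖w‖ = 1) : ℍ[ℝ] ≃ₗᵢ[ℝ] ℍ[ℝ] :=
  toIso (qrot z w) (fun x => by
    simp [qrot, norm_mul, Quaternion.norm_star, hz, hw])

/-!
Left and right multiplication by `i` commute with every element of `G`, so each eigenspace of an
element is closed under both. A nonzero subspace of `ℍ = ℂ ⊕ ℂj` closed under both contains `1` or
`j`, hence an element with an invariant line preserves one of the two fixed lines `ℝ·1` and `ℝ·j`.
If every element has an invariant line, `G` is therefore the union of the stabilizers of these two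
lines; as a group is never the union of two proper subgroups, one of the stabilizers is all of `G`.
-/

lemma map_span_singleton_eq_self_iff {K V : Type*} [DivisionRing K] [AddCommGroup V] [Module K V]
    (g : V ≃ₗ[K] V) {v : V} (hv : v ≠ 0) :
    (K ∙ v).map (g : V →ₗ[K] V) = K ∙ v ↔ ∃ c : K, g v = c • v := by
  simp only [Submodule.map_span, Set.image_singleton, LinearEquiv.coe_coe]
  constructor
  · intro h
    obtain ⟨c, hc⟩ := Submodule.mem_span_singleton.1 (h ▸ Submodule.mem_span_singleton_self (g v))
    exact ⟨c, hc.symm⟩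
  · rintro ⟨c, hc⟩
    have hc₀ : c ≠ 0 := by
      rintro rfl
      exact hv (g.map_eq_zero_iff.1 (by rw [hc, zero_smul]))
    rw [hc, Submodule.span_singleton_smul_eq hc₀.isUnit]

lemma exists_hasEigenvalue_of_map_eq_self {K V : Type*} [Field K] [AddCommGroup V]
    [Module K V] {g : V ≃ₗ[K] V} {L : Submodule K V} (hdim : Module.finrank K L = 1)
    (hL : L.map (g : V →ₗ[K] V) = L) :
    ∃ c : K, Module.End.HasEigenvalue (g : Module.End K V) c := by
  obtain ⟨v, hvL, hv⟩ := L.ne_bot_iff.1 (Submodule.isAtom_iff_finrank_eq_one.2 hdim).ne_bot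
  rw [eq_span_singleton_of_mem_of_finrank_eq_one hdim hvL hv,
    map_span_singleton_eq_self_iff g hv] at hL
  obtain ⟨c, hc⟩ := hL
  exact ⟨c, Module.End.hasEigenvalue_of_hasEigenvector
    (Module.End.hasEigenvector_iff.2 ⟨Module.End.mem_eigenspace_iff.2 hc, hv⟩)⟩

open scoped Pointwise in
lemma forall_map_eq_or_forall_map_eq {R M : Type*} [Semiring R] [AddCommMonoid M] [Module R M]
    {G : Subgroup (M ≃ₗ[R] M)} {L₁ L₂ : Submodule R M}
    (h : ∀ g ∈ G, L₁.map (g : M →ₗ[R] M) = L₁ ∨ L₂.map (g : M →ₗ[R] M) = L₂) :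
    (∀ g ∈ G, L₁.map (g : M →ₗ[R] M) = L₁) ∨ ∀ g ∈ G, L₂.map (g : M →ₗ[R] M) = L₂ :=
  SubgroupClass.subset_union (K := MulAction.stabilizer (M ≃ₗ[R] M) L₁)
    (L := MulAction.stabilizer (M ≃ₗ[R] M) L₂) |>.1 h

section MulCommAut

variable (K : Type*) {A : Type*} [CommSemiring K] [Semiring A] [Algebra K A]

/-- The group of `K`-linear automorphisms of a `K`-algebra that commute with left and with right
multiplication by `a`. For `a = i` in the quaternions it contains the rotations `[z,w]` with `z`
and `w` in `ℂ`. -/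
def mulCommAut (a : A) : Subgroup (A ≃ₗ[K] A) where
  carrier := {g | ∀ x, g (a * x) = a * g x ∧ g (x * a) = g x * a}
  mul_mem' {g h} hg hh x := by
    simp only [LinearEquiv.mul_apply, hh x, hg (h x), and_self]
  one_mem' _ := ⟨rfl, rfl⟩
  inv_mem' {g} hg x := by
    have hgx := hg (g.symm x)
    rw [g.apply_symm_apply] at hgx
    exact ⟨g.symm_apply_eq.2 hgx.1.symm, g.symm_apply_eq.2 hgx.2.symm⟩

variable {K}

lemma mem_mulCommAut_of_apply_eq_mul_mul {a z w : A} (hz : Commute a z) (hw : Commute a w)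
    {g : A ≃ₗ[K] A} (hg : ∀ x, g x = z * x * w) : g ∈ mulCommAut K a := fun x =>
  ⟨by simp only [hg, mul_assoc, hz.left_comm], by simp only [hg, mul_assoc, hw.eq]⟩

end MulCommAut

section Quaternion

/-- The quaternion `i`. -/
@[simps]
def quatI (K : Type*) [CommRing K] : ℍ[K] := ⟨0, 1, 0, 0⟩

/-- The quaternion `j`. -/
@[simps]
def quatJ (K : Type*) [CommRing K] : ℍ[K] := ⟨0, 0, 1, 0⟩

lemma commute_quatI {K : Type*} [CommRing K] {q : ℍ[K]} (hJ : q.imJ = 0) (hK : q.imK = 0) :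
    Commute (quatI K) q := by
  ext <;> simp [hJ, hK]

variable {K : Type*} [Field K] [LinearOrder K] [IsStrictOrderedRing K]

lemma mem_of_smul_add_smul_quatI_mul_mem {W : Submodule K ℍ[K]}
    (hW : ∀ x ∈ W, quatI K * x ∈ W) {u : ℍ[K]} {a b : K} (hab : a ≠ 0 ∨ b ≠ 0)
    (hu : a • u + b • (quatI K * u) ∈ W) : u ∈ W := by
  have norm_smul_eq : (a * a + b * b) • u =
      a • (a • u + b • (quatI K * u)) - b • (quatI K * (a • u + b • (quatI K * u))) := by
    ext <;> simp <;> ring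
  have norm_ne_zero : a * a + b * b ≠ 0 := by
    rwa [Ne, mul_self_add_mul_self_eq_zero, not_and_or]
  rw [← W.smul_mem_iff norm_ne_zero, norm_smul_eq]
  exact W.sub_mem (W.smul_mem a hu) (W.smul_mem b (hW _ hu))

lemma one_mem_or_quatJ_mem {W : Submodule K ℍ[K]} (hl : ∀ x ∈ W, quatI K * x ∈ W)
    (hr : ∀ x ∈ W, x * quatI K ∈ W) (hW : W ≠ ⊥) : 1 ∈ W ∨ quatJ K ∈ W := by
  obtain ⟨v, hvW, hv⟩ := W.ne_bot_iff.1 hW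
  have hconj : quatI K * v * quatI K ∈ W := hr _ (hl v hvW)
  -- `x ↦ i x i` is `-1` on `ℂ` and `1` on `ℂj`, so it separates the two components of `v`.
  have complex_part :
      v.re • (1 : ℍ[K]) + v.imI • (quatI K * 1) = (2⁻¹ : K) • (v - quatI K * v * quatI K) := by
    ext <;> simp <;> ring
  have j_part :
      v.imJ • quatJ K + v.imK • (quatI K * quatJ K) =
        (2⁻¹ : K) • (v + quatI K * v * quatI K) := by
    ext <;> simp <;> ring
  by_cases hre : v.re ≠ 0 ∨ v.imI ≠ 0
  · exact .inl <| mem_of_smul_add_smul_quatI_mul_mem hl hre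
      (complex_part ▸ W.smul_mem _ (W.sub_mem hvW hconj))
  · have hj : v.imJ ≠ 0 ∨ v.imK ≠ 0 := by
      contrapose! hv
      push Not at hre
      exact QuaternionAlgebra.ext hre.1 hre.2 hv.1 hv.2
    exact .inr <| mem_of_smul_add_smul_quatI_mul_mem hl hj
      (j_part ▸ W.smul_mem _ (W.add_mem hvW hconj))

lemma quatJ_ne_zero : quatJ K ≠ 0 := fun h =>
  one_ne_zero (α := K) (congrArg QuaternionAlgebra.imJ h)

lemma map_span_one_eq_or_map_span_quatJ_eq {g : ℍ[K] ≃ₗ[K] ℍ[K]} (hg : g ∈ mulCommAut K (quatI K))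
    {L : Submodule K ℍ[K]} (hdim : Module.finrank K L = 1)
    (hL : L.map (g : ℍ[K] →ₗ[K] ℍ[K]) = L) :
    (K ∙ (1 : ℍ[K])).map (g : ℍ[K] →ₗ[K] ℍ[K]) = K ∙ (1 : ℍ[K]) ∨
      (K ∙ quatJ K).map (g : ℍ[K] →ₗ[K] ℍ[K]) = K ∙ quatJ K := by
  obtain ⟨c, hc⟩ := exists_hasEigenvalue_of_map_eq_self hdim hL
  rw [map_span_singleton_eq_self_iff g one_ne_zero, map_span_singleton_eq_self_iff g quatJ_ne_zero]
  have mem_iff {x : ℍ[K]} : x ∈ Module.End.eigenspace (g : Module.End K ℍ[K]) c ↔ g x = c • x :=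
    Module.End.mem_eigenspace_iff
  refine (one_mem_or_quatJ_mem (fun x hx => ?_) (fun x hx => ?_) hc).imp
    (fun h => ⟨c, mem_iff.1 h⟩) (fun h => ⟨c, mem_iff.1 h⟩)
  · rw [mem_iff] at hx ⊢
    rw [(hg x).1, hx, mul_smul_comm]
  · rw [mem_iff] at hx ⊢
    rw [(hg x).2, hx, smul_mul_assoc]

theorem stmt_19_general {G : Subgroup (ℍ[K] ≃ₗ[K] ℍ[K])} (hG : G ≤ mulCommAut K (quatI K)) :
    (∃ L : Submodule K ℍ[K], Module.finrank K L = 1 ∧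
        ∀ g ∈ G, L.map (g : ℍ[K] →ₗ[K] ℍ[K]) = L) ∨
      (∃ g ∈ G, ¬ ∃ L : Submodule K ℍ[K], Module.finrank K L = 1 ∧
        L.map (g : ℍ[K] →ₗ[K] ℍ[K]) = L) := by
  refine or_iff_not_imp_right.2 fun h => ?_
  push Not at h
  have fixes_one_or_quatJ (g) (hg : g ∈ G) :=
    (h g hg).elim fun _ hL => map_span_one_eq_or_map_span_quatJ_eq (hG hg) hL.1 hL.2
  rcases forall_map_eq_or_forall_map_eq fixes_one_or_quatJ with h_one | h_quatJ
  · exact ⟨_, finrank_span_singleton one_ne_zero, h_one⟩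
  · exact ⟨_, finrank_span_singleton quatJ_ne_zero, h_quatJ⟩

end Quaternion

/-- The homomorphism that forgets that a linear automorphism is an isometry. -/
@[simps]
def isometryToLinearAut (R E : Type*) [Semiring R] [SeminormedAddCommGroup E] [Module R E] :
    (E ≃ₗᵢ[R] E) →* (E ≃ₗ[R] E) where
  toFun g := g.toLinearEquiv
  map_one' := rfl
  map_mul' _ _ := rfl

lemma isometryToLinearAut_rotIso_mem {z w : ℍ[ℝ]} (hz : ‖z‖ = 1) (hw : ‖w‖ = 1)
    (hzJ : z.imJ = 0) (hzK : z.imK = 0) (hwJ : w.imJ = 0) (hwK : w.imK = 0) :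
    isometryToLinearAut ℝ ℍ[ℝ] (rotIso z w hz hw) ∈ mulCommAut ℝ (quatI ℝ) := by
  have hz_star : Commute (quatI ℝ) (star z) :=
    commute_quatI (by rw [imJ_star, hzJ, neg_zero]) (by rw [imK_star, hzK, neg_zero])
  exact mem_mulCommAut_of_apply_eq_mul_mul hz_star (commute_quatI hwJ hwK) fun _ => rfl

/-- The torus translation group with parameters `(m, n, s)` either leaves some 1-dimensional
subspace of `ℍ` invariant, or contains an element with no invariant 1-dimensional subspace. -/
theorem stmt_19 (m n s : ℤ) (hm : 1 ≤ m) (hn : 1 ≤ n)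
    (hs₁ : -m ≤ 2 * s) (hs₂ : 2 * s ≤ n - m) :
    let g₁ : ℍ[ℝ] ≃ₗᵢ[ℝ] ℍ[ℝ] :=
      rotIso (expi (-(2 * Real.pi / m))) 1 (norm_expi _) norm_one
    let g₂ : ℍ[ℝ] ≃ₗᵢ[ℝ] ℍ[ℝ] :=
      rotIso (expi (-(((m : ℝ) + 2 * s) * Real.pi / (m * n)))) (expi (Real.pi / n))
        (norm_expi _) (norm_expi _)
    let G : Subgroup (ℍ[ℝ] ≃ₗᵢ[ℝ] ℍ[ℝ]) := Subgroup.closure {g₁, g₂}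
    (∃ L : Submodule ℝ ℍ[ℝ], Module.finrank ℝ L = 1 ∧
        ∀ g ∈ G, L.map (LinearIsometryEquiv.toLinearEquiv g : ℍ[ℝ] →ₗ[ℝ] ℍ[ℝ]) = L) ∨
      (∃ g ∈ G, ¬ ∃ L : Submodule ℝ ℍ[ℝ], Module.finrank ℝ L = 1 ∧
        L.map (LinearIsometryEquiv.toLinearEquiv g : ℍ[ℝ] →ₗ[ℝ] ℍ[ℝ]) = L) := by
  intro g₁ g₂ G
  have hG : G.map (isometryToLinearAut ℝ ℍ[ℝ]) ≤ mulCommAut ℝ (quatI ℝ) := by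
    rw [Subgroup.map_le_iff_le_comap, Subgroup.closure_le]
    rintro g (rfl | rfl) <;> exact isometryToLinearAut_rotIso_mem _ _ rfl rfl rfl rfl
  simpa only [Subgroup.mem_map, isometryToLinearAut_apply, forall_exists_index, and_imp,
    forall_apply_eq_imp_iff₂, exists_exists_and_eq_and] using stmt_19_general hG
end
end
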